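/- arXiv:1805.00340 — 4 statements merged into one kernel-verified Lean document; each statement's English description precedes it below -/
import Mathlib

section
/- For every integer k ≥ 2 there exist constants λ_max and b_0 (depending only on k) such that the following holds for all integers r ≥ k: if (𝒜, ℬ) is a k-valid pair with |ℬ| = b ≥ b_0 and |𝒜| = f(r, k, b) (i.e. (𝒜, ℬ) is extremal), then there exist a set S ⊆ ℕ with |S| = r − k and a subfamily 𝒟 ⊆ ℬ with |𝒟| ≥ b − λ_max such that S ⊆ B for every B ∈ 𝒟. -/
/-- A pair `(𝒜, ℬ)` of families, where `𝒜` consists of `r`-element subsets of `ℕ` and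
`ℬ` of `(r-1)`-element subsets of `ℕ`, is `k`-valid if every `A ∈ 𝒜` has at least `k`
subsets of cardinality `r - 1` belonging to `ℬ`. -/
def ValidPair (r k : ℕ) (𝒜 ℬ : Finset (Finset ℕ)) : Prop :=
  (∀ A ∈ 𝒜, A.card = r) ∧ (∀ B ∈ ℬ, B.card = r - 1) ∧
    ∀ A ∈ 𝒜, k ≤ (ℬ.filter (fun B => B ⊆ A)).card

/-- `f r k b` is the maximum of `|𝒜|` over all `k`-valid pairs `(𝒜, ℬ)` with `|ℬ| = b`. -/
noncomputable def f (r k b : ℕ) : ℕ :=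
  sSup {a : ℕ | ∃ 𝒜 ℬ : Finset (Finset ℕ), ValidPair r k 𝒜 ℬ ∧ ℬ.card = b ∧ 𝒜.card = a}

/-- Cascade function: the maximal number of `(i+2)`-sets all of whose facets lie in a family
of `b` sets of size `i+1`. -/
def phi : ℕ → ℕ → ℕ
  | 0, b => b.choose 2
  | (i+1), b =>
    (Nat.findGreatest (fun n => n.choose (i+2) ≤ b) (b+i+2)).choose (i+3) +
      phi i (b - (Nat.findGreatest (fun n => n.choose (i+2) ≤ b) (b+i+2)).choose (i+2))

lemma phi_zero (i : ℕ) : phi i 0 = 0 := by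
  induction i with
  | zero => simp [phi]
  | succ i ih =>
    have h : (Nat.findGreatest (fun n => n.choose (i+2) ≤ 0) (0+i+2)) < i + 3 := by
      have := Nat.findGreatest_le (P := fun n => n.choose (i+2) ≤ 0) (0+i+2)
      omega
    simp only [phi]
    rw [Nat.choose_eq_zero_of_lt h]
    simp [ih]

lemma choose_ge_sub (n j : ℕ) (hj : 1 ≤ j) : n + 1 ≤ n.choose j + j := by
  induction n with
  | zero => omega
  | succ n ih =>
    obtain ⟨j, rfl⟩ : ∃ j', j = j' + 1 := ⟨j - 1, by omega⟩
    rw [Nat.choose_succ_succ']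
    by_cases h : j ≤ n
    · have := Nat.choose_pos h
      omega
    · omega

lemma findGreatest_choose (j n b : ℕ) (hj : 1 ≤ j) (h1 : n.choose j ≤ b) (h2 : b < (n+1).choose j) :
    Nat.findGreatest (fun n => n.choose j ≤ b) (b + j) = n := by
  rw [Nat.findGreatest_eq_iff]
  refine ⟨?_, fun _ => h1, ?_⟩
  · have := choose_ge_sub n j hj
    omega
  · intro m hm _ h3
    have : (n+1).choose j ≤ m.choose j := Nat.choose_le_choose j hm
    omega

lemma phi_step_lt (i n s : ℕ) (hs : s < n.choose (i+1)) :
    phi (i+1) (n.choose (i+2) + s) = n.choose (i+3) + phi i s := by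
  have h := findGreatest_choose (i+2) n (n.choose (i+2) + s) (by omega) (by omega)
    (by have : (n+1).choose (i+2) = n.choose (i+1) + n.choose (i+2) := Nat.choose_succ_succ' n (i+1); omega)
  simp only [phi]
  rw [add_assoc _ i 2, h]
  simp

lemma phi_choose (i n : ℕ) : phi i (n.choose (i+1)) = n.choose (i+2) := by
  cases i with
  | zero => simp [phi]
  | succ i =>
    by_cases h : i + 1 ≤ n
    · have := phi_step_lt i n 0 (Nat.choose_pos h)
      simpa [phi_zero] using this
    · rw [Nat.choose_eq_zero_of_lt (by omega), Nat.choose_eq_zero_of_lt (by omega), phi_zero]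

lemma phi_step (i n s : ℕ) (hs : s ≤ n.choose (i+1)) :
    phi (i+1) (n.choose (i+2) + s) = n.choose (i+3) + phi i s := by
  rcases hs.lt_or_eq with h | h
  · exact phi_step_lt i n s h
  · subst h
    rw [phi_choose, add_comm (n.choose (i+2)), ← Nat.choose_succ_succ, phi_choose,
      Nat.choose_succ_succ, add_comm]

lemma exists_level (j b : ℕ) (hj : 1 ≤ j) : ∃ n, n.choose j ≤ b ∧ b < (n+1).choose j := by
  have h0 : ∃ n, b < (n+1).choose j := ⟨b + j, by have := choose_ge_sub (b+j+1) j hj; omega⟩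
  classical
  refine ⟨Nat.find h0, ?_, Nat.find_spec h0⟩
  by_cases h : Nat.find h0 = 0
  · rw [h, Nat.choose_eq_zero_of_lt (by omega)]; omega
  · have := Nat.find_min h0 (m := Nat.find h0 - 1) (by omega)
    rw [Nat.sub_add_cancel (by omega)] at this
    omega

lemma phi_le_succ (i b : ℕ) : phi i b ≤ phi i (b+1) := by
  induction i generalizing b with
  | zero => exact Nat.choose_le_choose 2 (by omega)
  | succ i ih =>
    obtain ⟨n, h1, h2⟩ := exists_level (i+2) b (by omega)
    obtain ⟨s, rfl⟩ := Nat.exists_eq_add_of_le h1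
    have h3 : s + 1 ≤ n.choose (i+1) := by
      have : (n+1).choose (i+2) = n.choose (i+1) + n.choose (i+2) := Nat.choose_succ_succ' n (i+1)
      omega
    rw [add_assoc, phi_step i n s (by omega), phi_step i n (s+1) h3]
    have := ih s
    omega

lemma phi_mono (i : ℕ) : Monotone (phi i) := monotone_nat_of_le_succ (phi_le_succ i)

open Finset in
open scoped FinsetFamily in
lemma initSeg_le (i N : ℕ) (𝒞 : Finset (Finset (Fin N))) (h : Colex.IsInitSeg 𝒞 (i+2)) :
    #𝒞 ≤ phi i #(∂ 𝒞) := by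
  induction i generalizing 𝒞 with
  | zero =>
    simp only [phi]
    rw [← card_powersetCard]
    apply card_le_card_of_injOn (fun C => C.image (fun x => ({x} : Finset (Fin N))))
    · intro C hC
      have hc := h.1 hC
      rw [mem_coe, mem_powersetCard]
      refine ⟨?_, ?_⟩
      · intro D hD
        rw [mem_image] at hD
        obtain ⟨x, hx, rfl⟩ := hD
        rw [mem_shadow_iff]
        obtain ⟨a, b, hab, rfl⟩ := card_eq_two.1 hc
        refine ⟨_, hC, ?_⟩
        simp only [mem_insert, mem_singleton] at hx
        rcases hx with rfl | rfl
        · exact ⟨b, by simp, by ext y; simp; grind⟩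
        · exact ⟨a, by simp, by ext y; simp; grind⟩
      · rw [card_image_of_injective _ (singleton_injective)]
        exact hc
    · intro C _ D _ hCD
      exact image_injective (singleton_injective) hCD
  | succ i ih =>
    rcases 𝒞.eq_empty_or_nonempty with rfl | hne
    · simp
    have hU : (𝒞.sup id).Nonempty := by
      obtain ⟨C, hC⟩ := hne
      have : C.Nonempty := by rw [← card_pos, h.1 hC]; omega
      obtain ⟨x, hx⟩ := this
      exact ⟨x, by simp only [mem_sup]; exact ⟨C, hC, hx⟩⟩
    obtain ⟨v, hv, hmax⟩ := exists_max_image (𝒞.sup id) id hU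
    obtain ⟨C0, hC0, hvC0⟩ := mem_sup.1 hv
    simp only [id] at hvC0
    have hle : ∀ C ∈ 𝒞, ∀ x ∈ C, x ≤ v := fun C hC x hx => hmax x (mem_sup.2 ⟨C, hC, hx⟩)
    have hlt : ∀ D : Finset (Fin N), D ⊆ Iio v → #D = i + 3 → D ∈ 𝒞 := by
      intro D hD hc
      refine h.2 hC0 ⟨?_, hc⟩
      rw [Colex.toColex_lt_toColex_iff_exists_forall_lt]
      exact ⟨v, hvC0, fun h => by simpa using hD h, fun b hb _ => by simpa using hD hb⟩
    set 𝒞' := (𝒞.filter (v ∈ ·)).image (fun C => C.erase v) with h𝒞'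
    have hmem' : ∀ D, D ∈ 𝒞' ↔ v ∉ D ∧ insert v D ∈ 𝒞 := by
      intro D
      simp only [h𝒞', mem_image, mem_filter]
      constructor
      · rintro ⟨C, ⟨hC, hvC⟩, rfl⟩
        exact ⟨by simp, by rwa [insert_erase hvC]⟩
      · rintro ⟨h1, h2⟩
        exact ⟨_, ⟨h2, by simp⟩, erase_insert h1⟩
    have hD' : ∀ D ∈ 𝒞', D ⊆ Iio v := by
      intro D hD x hx
      obtain ⟨h1, h2⟩ := (hmem' D).1 hD
      have := hle _ h2 x (by simp [hx])
      rw [mem_Iio]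
      exact lt_of_le_of_ne this (fun h => h1 (h ▸ hx))
    have hcard' : ∀ D ∈ 𝒞', #D = i + 2 := by
      intro D hD
      obtain ⟨h1, h2⟩ := (hmem' D).1 hD
      have := h.1 h2
      rw [card_insert_of_notMem h1] at this
      omega
    have hinit' : Colex.IsInitSeg 𝒞' (i+2) := by
      refine ⟨fun D hD => hcard' D hD, ?_⟩
      rintro D E hD ⟨hED, hE⟩
      have hD1 := hD' D hD
      have hE1 : ∀ x ∈ E, x < v :=
        Colex.forall_lt_mono hED.le (fun x hx => by simpa using hD1 hx)
      have hvE : v ∉ E := fun h => lt_irrefl _ (hE1 v h)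
      obtain ⟨h1, h2⟩ := (hmem' D).1 hD
      refine (hmem' E).2 ⟨hvE, h.2 h2 ⟨?_, by rw [card_insert_of_notMem hvE, hE]⟩⟩
      rw [Colex.toColex_lt_toColex_iff_exists_forall_lt] at hED ⊢
      obtain ⟨a, ha, haE, hb⟩ := hED
      refine ⟨a, by simp [ha], ?_, ?_⟩
      · simp only [mem_insert, not_or]
        exact ⟨fun h => h1 (h ▸ ha), haE⟩
      · intro b hb1 hb2
        simp only [mem_insert, not_or] at hb1 hb2
        exact hb b (hb1.resolve_left hb2.1) hb2.2
    have hih := ih 𝒞' hinit'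
    have hc1 : #(𝒞.filter (v ∈ ·)) = #𝒞' := by
      rw [h𝒞', card_image_of_injOn]
      intro C hC D hD hCD
      rw [mem_coe, mem_filter] at hC hD
      have : insert v (C.erase v) = insert v (D.erase v) := by
        simp only at hCD
        rw [hCD]
      rwa [insert_erase hC.2, insert_erase hD.2] at this
    have hc2 : #(𝒞.filter (v ∉ ·)) ≤ (v : ℕ).choose (i+3) := by
      rw [← Fin.card_Iio v, ← card_powersetCard]
      apply card_le_card
      intro C hC
      rw [mem_filter] at hC
      rw [mem_powersetCard]
      refine ⟨fun x hx => ?_, h.1 hC.1⟩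
      rw [mem_Iio]
      exact lt_of_le_of_ne (hle C hC.1 x hx) (fun h => hC.2 (h ▸ hx))
    have hc3 := card_filter_add_card_filter_not (s := 𝒞) (v ∈ ·)
    have hc4 : #(∂ 𝒞') ≤ (v : ℕ).choose (i+1) := by
      rw [← Fin.card_Iio v, ← card_powersetCard]
      apply card_le_card
      intro E hE
      rw [mem_shadow_iff] at hE
      obtain ⟨D, hD, a, ha, rfl⟩ := hE
      rw [mem_powersetCard]
      exact ⟨(erase_subset _ _).trans (hD' D hD), by rw [card_erase_of_mem ha, hcard' D hD]; rfl⟩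
    have hc5 : (v : ℕ).choose (i+2) + #(∂ 𝒞') ≤ #(∂ 𝒞) := by
      have e1 : #((∂ 𝒞').image (insert v)) = #(∂ 𝒞') := by
        apply card_image_of_injOn
        intro E hE F hF hEF
        have : ∀ E ∈ ∂ 𝒞', v ∉ E := by
          intro E hE hvE
          rw [mem_shadow_iff] at hE
          obtain ⟨D, hD, a, ha, rfl⟩ := hE
          have := hD' D hD (mem_of_mem_erase hvE)
          simp at this
        have h1 := this E hE
        have h2 := this F hF
        have : (insert v E).erase v = (insert v F).erase v := by
          rw [hEF]
        rwa [erase_insert h1, erase_insert h2] at this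
      rw [← Fin.card_Iio v, ← card_powersetCard, ← e1, ← card_union_of_disjoint]
      · apply card_le_card
        apply union_subset
        · intro D hD
          rw [mem_powersetCard] at hD
          rw [mem_shadow_iff_insert_mem]
          by_cases hDI : D = Iio v
          · refine ⟨v, by simp [hDI], ?_⟩
            have : C0 = insert v D := by
              apply eq_of_subset_of_card_le
              · intro x hx
                have := hle C0 hC0 x hx
                simp only [hDI, mem_insert, mem_Iio]
                exact this.eq_or_lt
              · rw [h.1 hC0]
                have := card_insert_le v D
                omega
            exact this ▸ hC0
          · have : ∃ w ∈ Iio v, w ∉ D := by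
              by_contra hcon
              push Not at hcon
              exact hDI (subset_antisymm hD.1 hcon)
            obtain ⟨w, hw, hwD⟩ := this
            refine ⟨w, hwD, hlt _ ?_ ?_⟩
            · exact insert_subset hw hD.1
            · rw [card_insert_of_notMem hwD, hD.2]
        · intro E hE
          rw [mem_image] at hE
          obtain ⟨F, hF, rfl⟩ := hE
          rw [mem_shadow_iff] at hF
          obtain ⟨D, hD, a, ha, rfl⟩ := hF
          obtain ⟨h1, h2⟩ := (hmem' D).1 hD
          rw [mem_shadow_iff]
          refine ⟨_, h2, a, by simp [ha], ?_⟩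
          rw [erase_insert_of_ne]
          rintro rfl
          exact h1 ha
      · rw [disjoint_left]
        intro D hD hD2
        rw [mem_powersetCard] at hD
        rw [mem_image] at hD2
        obtain ⟨F, hF, rfl⟩ := hD2
        have := hD.1 (mem_insert_self v F)
        simp at this
    calc #𝒞 ≤ (v : ℕ).choose (i+3) + phi i #(∂ 𝒞') := by omega
      _ = phi (i+1) ((v : ℕ).choose (i+2) + #(∂ 𝒞')) := (phi_step i v _ hc4).symm
      _ ≤ _ := phi_mono _ hc5

open Finset in
lemma exists_initSeg_card (N k a : ℕ) (ha : a ≤ #(powersetCard k (univ : Finset (Fin N)))) :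
    ∃ 𝒞 : Finset (Finset (Fin N)), Colex.IsInitSeg 𝒞 k ∧ #𝒞 = a := by
  obtain ⟨d, hd⟩ := Nat.exists_eq_add_of_le ha
  induction d generalizing a with
  | zero =>
    refine ⟨powersetCard k univ, ⟨fun C hC => ?_, ?_⟩, by omega⟩
    · simpa [mem_powersetCard] using hC
    · rintro s t _ ⟨_, h⟩
      simp [mem_powersetCard, h]
  | succ d ih =>
    obtain ⟨𝒞, h1, h2⟩ := ih (a+1) (by omega) (by omega)
    have hne : 𝒞.Nonempty := by rw [← card_pos]; omega
    obtain ⟨M, hM, hmax⟩ := exists_max_image 𝒞 (fun s => toColex s) hne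
    refine ⟨𝒞.erase M, ⟨fun C hC => h1.1 (mem_of_mem_erase hC), ?_⟩, by
      rw [card_erase_of_mem hM]; omega⟩
    rintro s t hs ⟨hts, ht⟩
    have hs' := mem_of_mem_erase hs
    refine mem_erase.2 ⟨?_, h1.2 hs' ⟨hts, ht⟩⟩
    rintro rfl
    exact absurd hts (not_lt.2 (hmax s hs'))

open Finset in
open scoped FinsetFamily in
lemma kk_fin (i N : ℕ) (𝒜 : Finset (Finset (Fin N))) (h : ∀ A ∈ 𝒜, #A = i + 2) :
    #𝒜 ≤ phi i #(∂ 𝒜) := by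
  obtain ⟨𝒞, h1, h2⟩ := exists_initSeg_card N (i+2) #𝒜 (card_le_card (fun A hA => by
    simp [mem_powersetCard, h A hA]))
  have h3 := kruskal_katona (𝒜 := 𝒜) (𝒞 := 𝒞) (r := i+2) (fun A hA => h A hA) h2.le h1
  rw [← h2]
  exact (initSeg_le i N 𝒞 h1).trans (phi_mono i h3)

open Finset in
/-- Numerical Kruskal-Katona upper bound. -/
lemma kk_upper (i : ℕ) (𝒜 ℬ : Finset (Finset ℕ)) (h : ∀ A ∈ 𝒜, #A = i + 2)
    (hs : ∀ A ∈ 𝒜, ∀ x ∈ A, A.erase x ∈ ℬ) : #𝒜 ≤ phi i #ℬ := by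
  obtain ⟨N, hN⟩ : ∃ N, ∀ A ∈ 𝒜, ∀ x ∈ A, x < N := by
    refine ⟨(𝒜.sup id).sup id + 1, fun A hA x hx => ?_⟩
    have : x ≤ (𝒜.sup id).sup id := Finset.le_sup (f := id) (mem_sup.2 ⟨A, hA, hx⟩)
    omega
  let g : Finset ℕ → Finset (Fin N) := fun A => univ.filter (fun x => (x : ℕ) ∈ A)
  have hg : ∀ A ∈ 𝒜, (g A).map Fin.valEmbedding = A := by
    intro A hA
    ext x
    simp only [g, mem_map, mem_filter, mem_univ, true_and, Fin.valEmbedding_apply]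
    constructor
    · rintro ⟨y, hy, rfl⟩; exact hy
    · intro hx; exact ⟨⟨x, hN A hA x hx⟩, hx, rfl⟩
  have hinj : Set.InjOn g 𝒜 := by
    intro A hA B hB hAB
    rw [← hg A hA, ← hg B hB, hAB]
  have h1 := kk_fin i N (𝒜.image g) (by
    intro A hA
    rw [mem_image] at hA
    obtain ⟨A, hA, rfl⟩ := hA
    rw [← h A hA, ← card_map Fin.valEmbedding, hg A hA])
  rw [card_image_of_injOn hinj] at h1
  refine h1.trans (phi_mono i ?_)
  rw [← card_map (mapEmbedding (Fin.valEmbedding (n := N))).toEmbedding]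
  apply card_le_card
  intro D hD
  rw [mem_map] at hD
  obtain ⟨E, hE, rfl⟩ := hD
  rw [mem_shadow_iff] at hE
  obtain ⟨A', hA', a, ha, rfl⟩ := hE
  rw [mem_image] at hA'
  obtain ⟨A, hA, rfl⟩ := hA'
  have : (mapEmbedding (Fin.valEmbedding (n := N))).toEmbedding ((g A).erase a)
      = A.erase (a : ℕ) := by
    simp only [RelEmbedding.coe_toEmbedding, mapEmbedding_apply]
    rw [map_erase, hg A hA]
    rfl
  rw [this]
  apply hs A hA
  simpa [g] using ha

open Finset in
/-- Construction attaining the cascade function. -/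
lemma kk_lower (i n b : ℕ) (hb : b ≤ n.choose (i+1)) :
    ∃ 𝒜 ℬ : Finset (Finset ℕ), 𝒜 ⊆ powersetCard (i+2) (range n) ∧
      ℬ ⊆ powersetCard (i+1) (range n) ∧ #ℬ = b ∧ #𝒜 = phi i b ∧
      ∀ A ∈ 𝒜, ∀ x ∈ A, A.erase x ∈ ℬ := by
  induction i generalizing n b with
  | zero =>
    simp only [zero_add, Nat.choose_one_right] at hb
    refine ⟨powersetCard 2 (range b), powersetCard 1 (range b), ?_, ?_, ?_, ?_, ?_⟩
    · exact powersetCard_mono (range_subset_range.2 hb)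
    · exact powersetCard_mono (range_subset_range.2 hb)
    · simp
    · simp [phi]
    · intro A hA x hx
      rw [mem_powersetCard] at hA ⊢
      exact ⟨(erase_subset _ _).trans hA.1, by rw [card_erase_of_mem hx, hA.2]⟩
  | succ i ih =>
    induction n generalizing b with
    | zero =>
      have : b = 0 := by simpa using hb
      subst this
      exact ⟨∅, ∅, by simp, by simp, by simp, by simp [phi_zero], by simp⟩
    | succ n ihn =>
      by_cases hbn : b ≤ n.choose (i+2)
      · obtain ⟨𝒜, ℬ, h1, h2, h3, h4, h5⟩ := ihn b hbn
        exact ⟨𝒜, ℬ, h1.trans (powersetCard_mono (range_subset_range.2 (by omega))),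
          h2.trans (powersetCard_mono (range_subset_range.2 (by omega))), h3, h4, h5⟩
      · obtain ⟨s, rfl⟩ := Nat.exists_eq_add_of_le (not_le.1 hbn).le
        have hs : s ≤ n.choose (i+1) := by
          have : (n+1).choose (i+1+1) = n.choose (i+1) + n.choose (i+2) := Nat.choose_succ_succ _ _
          omega
        obtain ⟨𝒜, ℬ, h1, h2, h3, h4, h5⟩ := ih n s hs
        have key : ∀ (t : ℕ) (𝒳 : Finset (Finset ℕ)), 𝒳 ⊆ powersetCard t (range n) →
            powersetCard (t+1) (range n) ∪ 𝒳.image (insert n) ⊆ powersetCard (t+1) (range (n+1)) ∧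
            #(powersetCard (t+1) (range n) ∪ 𝒳.image (insert n)) = n.choose (t+1) + #𝒳 := by
          intro t 𝒳 h𝒳
          have hn : ∀ X ∈ 𝒳, n ∉ X := by
            intro X hX hnX
            have := (mem_powersetCard.1 (h𝒳 hX)).1 hnX
            simp at this
          constructor
          · apply union_subset
            · exact powersetCard_mono (range_subset_range.2 (by omega))
            · intro Y hY
              rw [mem_image] at hY
              obtain ⟨X, hX, rfl⟩ := hY
              have := mem_powersetCard.1 (h𝒳 hX)
              rw [mem_powersetCard]
              refine ⟨?_, by rw [card_insert_of_notMem (hn X hX), this.2]⟩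
              rw [range_add_one]
              exact insert_subset_insert _ this.1
          · rw [card_union_of_disjoint, card_powersetCard, card_range, card_image_of_injOn]
            · intro X hX Y hY hXY
              have : (insert n X).erase n = (insert n Y).erase n := by
                rw [hXY]
              rwa [erase_insert (hn X hX), erase_insert (hn Y hY)] at this
            · rw [disjoint_left]
              intro D hD hD2
              rw [mem_powersetCard] at hD
              rw [mem_image] at hD2
              obtain ⟨F, hF, rfl⟩ := hD2
              have := hD.1 (mem_insert_self n F)
              simp at this
        obtain ⟨a1, a2⟩ := key (i+2) 𝒜 h1
        obtain ⟨b1, b2⟩ := key (i+1) ℬ h2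
        refine ⟨_, _, a1, b1, by rw [b2, h3], by rw [a2, h4, phi_step i n s hs], ?_⟩
        intro A hA x hx
        rw [mem_union] at hA ⊢
        rcases hA with hA | hA
        · left
          rw [mem_powersetCard] at hA ⊢
          exact ⟨(erase_subset _ _).trans hA.1, by rw [card_erase_of_mem hx, hA.2]; rfl⟩
        · rw [mem_image] at hA
          obtain ⟨A, hA, rfl⟩ := hA
          have hA1 := mem_powersetCard.1 (h1 hA)
          have hnA : n ∉ A := fun h => by simpa using hA1.1 h
          by_cases hxn : x = n
          · subst hxn
            left
            rw [erase_insert hnA, mem_powersetCard]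
            exact hA1
          · right
            rw [mem_insert] at hx
            rw [erase_insert_of_ne (Ne.symm hxn)]
            exact mem_image_of_mem _ (h5 A hA x (hx.resolve_left hxn))

open Finset in
lemma phi_superadd (i p q : ℕ) : phi i p + phi i q ≤ phi i (p + q) := by
  have hch : ∀ b, b ≤ (b+i+1).choose (i+1) := fun b => by
    have := choose_ge_sub (b+i+1) (i+1) (by omega); omega
  obtain ⟨𝒜₁, ℬ₁, a1, a2, a3, a4, a5⟩ := kk_lower i _ p (hch p)
  obtain ⟨𝒜₂, ℬ₂, b1, b2, b3, b4, b5⟩ := kk_lower i _ q (hch q)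
  set n := p + i + 1
  let e : ℕ ↪ ℕ := addRightEmbedding n
  let E := (mapEmbedding e).toEmbedding
  have hE : ∀ X : Finset ℕ, E X = X.map e := fun X => rfl
  have hd : Disjoint 𝒜₁ (𝒜₂.map E) := by
    rw [disjoint_left]
    intro A hA hA2
    obtain ⟨A', hA', rfl⟩ := mem_map.1 hA2
    have h1 := mem_powersetCard.1 (a1 hA)
    have h2 := mem_powersetCard.1 (b1 hA')
    have : A'.Nonempty := by rw [← card_pos]; omega
    obtain ⟨x, hx⟩ := this
    have := h1.1 (show e x ∈ E A' by rw [hE]; exact mem_map_of_mem _ hx)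
    simp [e] at this
  have h := kk_upper i (𝒜₁ ∪ 𝒜₂.map E) (ℬ₁ ∪ ℬ₂.map E) (by
      intro A hA
      rcases mem_union.1 hA with hA | hA
      · exact (mem_powersetCard.1 (a1 hA)).2
      · obtain ⟨A', hA', rfl⟩ := mem_map.1 hA
        rw [hE, card_map]
        exact (mem_powersetCard.1 (b1 hA')).2) (by
      intro A hA x hx
      rw [mem_union]
      rcases mem_union.1 hA with hA | hA
      · exact Or.inl (a5 A hA x hx)
      · obtain ⟨A', hA', rfl⟩ := mem_map.1 hA
        right
        rw [hE] at hx
        obtain ⟨y, hy, rfl⟩ := mem_map.1 hx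
        rw [hE, ← map_erase, ← hE]
        exact mem_map_of_mem _ (b5 A' hA' y hy))
  rw [card_union_of_disjoint hd, card_map, a4, b4] at h
  refine h.trans (phi_mono i ?_)
  refine (card_union_le _ _).trans ?_
  rw [card_map, a3, b3]

lemma phi_upper (i n q : ℕ) (hq : q ≤ n.choose (i+1)) : (i+2) * phi i q ≤ q * (n - (i+1)) := by
  induction i generalizing n q with
  | zero =>
    simp only [zero_add, Nat.choose_one_right] at hq
    simp only [phi, zero_add]
    have : q.choose 2 * 2 = q.choose 1 * (q - 1) := Nat.choose_succ_right_eq q 1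
    rw [mul_comm, this, Nat.choose_one_right]
    gcongr
  | succ i ih =>
    induction n generalizing q with
    | zero =>
      have : q = 0 := by simpa using hq
      subst this
      simp [phi_zero]
    | succ n ihn =>
      by_cases hbn : q ≤ n.choose (i+2)
      · refine (ihn q hbn).trans ?_
        gcongr
        omega
      · obtain ⟨s, rfl⟩ := Nat.exists_eq_add_of_le (not_le.1 hbn).le
        have hs : s ≤ n.choose (i+1) := by
          have : (n+1).choose (i+1+1) = n.choose (i+1) + n.choose (i+2) := Nat.choose_succ_succ _ _
          omega
        rw [phi_step i n s hs]
        have h1 := ih n s hs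
        have h2 : phi i s ≤ n.choose (i+2) := by
          rw [← phi_choose]
          exact phi_mono i hs
        by_cases hn : i + 2 ≤ n
        · obtain ⟨d, rfl⟩ := Nat.exists_eq_add_of_le hn
          have h3 := Nat.choose_succ_right_eq (i+2+d) (i+2)
          have e1 : i + 2 + d - (i+1) = d + 1 := by omega
          have e2 : i + 2 + d - (i+2) = d := by omega
          have e3 : i + 2 + d + 1 - (i+1+1) = d + 1 := by omega
          rw [e1] at h1
          rw [e2] at h3
          rw [e3]
          have h3' : (i+2+d).choose (i+3) * (i+3) = (i+2+d).choose (i+2) * d := h3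
          nlinarith
        · have z1 : n.choose (i+2) = 0 := Nat.choose_eq_zero_of_lt (by omega)
          have z2 : n.choose (i+3) = 0 := Nat.choose_eq_zero_of_lt (by omega)
          have z3 : phi i s = 0 := by omega
          rw [z2, z3]
          simp

lemma choose_mid (i x y : ℕ) (hxy : x ≤ y) :
    (i+2) * x.choose (i+3) + (x - (i+1)) * y.choose (i+2) ≤
      (i+2) * y.choose (i+3) + (x - (i+1)) * x.choose (i+2) := by
  induction y, hxy using Nat.le_induction with
  | base => exact le_rfl
  | succ y hy ih =>
    have e1 : (y+1).choose (i+3) = y.choose (i+2) + y.choose (i+3) := Nat.choose_succ_succ' _ _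
    have e2 : (y+1).choose (i+2) = y.choose (i+1) + y.choose (i+2) := Nat.choose_succ_succ' _ _
    have e3 : y.choose (i+2) * (i+2) = y.choose (i+1) * (y - (i+1)) :=
      Nat.choose_succ_right_eq y (i+1)
    have e4 : y.choose (i+1) * (x - (i+1)) ≤ y.choose (i+1) * (y - (i+1)) := by gcongr
    rw [e1, e2]
    nlinarith

lemma phi_blocks (i N p q : ℕ) (hN : N.choose (i+2) ≤ p) :
    ∃ q1 q2 mid G, q1 + mid + q2 = q ∧
      phi i q1 + phi i q2 + G + phi (i+1) p ≤ phi (i+1) (p + q) ∧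
      (N - i) * mid ≤ (i+2) * G := by
  obtain ⟨n, h1, h2⟩ := exists_level (i+2) p (by omega)
  obtain ⟨n', h3, h4⟩ := exists_level (i+2) (p+q) (by omega)
  have hmono : ∀ a b : ℕ, a ≤ b → a.choose (i+2) ≤ b.choose (i+2) :=
    fun a b h => Nat.choose_le_choose _ h
  have hNn : N ≤ n := by
    by_contra hcon
    have := hmono (n+1) N (by omega)
    omega
  have hnn : n ≤ n' := by
    by_contra hcon
    have := hmono (n'+1) n (by omega)
    omega
  have c1 : (n+1).choose (i+2) = n.choose (i+1) + n.choose (i+2) := Nat.choose_succ_succ' _ _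
  have c1' : (n+1).choose (i+3) = n.choose (i+2) + n.choose (i+3) := Nat.choose_succ_succ' _ _
  have c2 : (n'+1).choose (i+2) = n'.choose (i+1) + n'.choose (i+2) := Nat.choose_succ_succ' _ _
  obtain ⟨s, hs⟩ := Nat.exists_eq_add_of_le h1
  obtain ⟨s', hs'⟩ := Nat.exists_eq_add_of_le h3
  have p1 : phi (i+1) p = n.choose (i+3) + phi i s := by
    rw [hs]; exact phi_step i n s (by omega)
  have p2 : phi (i+1) (p+q) = n'.choose (i+3) + phi i s' := by
    rw [hs']; exact phi_step i n' s' (by omega)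
  rcases hnn.eq_or_lt with rfl | hlt
  · refine ⟨q, 0, 0, 0, by omega, ?_, by simp⟩
    rw [p1, p2, phi_zero]
    have := phi_superadd i s q
    have e : s + q = s' := by omega
    rw [e] at this
    omega
  · have m1 := hmono (n+1) n' hlt
    have m2 : (n+1).choose (i+3) ≤ n'.choose (i+3) := Nat.choose_le_choose _ hlt
    refine ⟨n.choose (i+1) - s, s', n'.choose (i+2) - (n+1).choose (i+2),
      n'.choose (i+3) - (n+1).choose (i+3), by omega, ?_, ?_⟩
    · rw [p1, p2]
      have := phi_superadd i s (n.choose (i+1) - s)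
      have e : s + (n.choose (i+1) - s) = n.choose (i+1) := by omega
      rw [e, phi_choose] at this
      omega
    · have h := choose_mid i (n+1) n' hlt
      obtain ⟨u, hu⟩ := Nat.exists_eq_add_of_le m1
      obtain ⟨v, hv⟩ := Nat.exists_eq_add_of_le m2
      rw [hu, hv] at h ⊢
      simp only [Nat.add_sub_cancel_left]
      have e : n + 1 - (i+1) = n - i := by omega
      rw [e] at h
      have : (N - i) * u ≤ (n - i) * u := by gcongr
      nlinarith

lemma phi_superlinear (i D : ℕ) : ∃ N0, ∀ N, N0 ≤ N → ∀ q q1, N.choose (i+2) ≤ q →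
    q ≤ D * q1 → D * N * q ≤ phi i q1 := by
  let E := 2 * (i+2) * D * D + 2 * (i+1)
  refine ⟨2^(i+2) * (i+2).factorial * D * E^(i+1) + 2*(i+2) + 1, ?_⟩
  intro N hN q q1 hq hq1
  obtain ⟨L, h1, h2⟩ := exists_level (i+1) q1 (by omega)
  have hNpos : 0 < N := by omega
  have hD : 0 < D := by
    rcases Nat.eq_zero_or_pos D with h | h
    · subst h
      have : 0 < N.choose (i+2) := Nat.choose_pos (by omega)
      omega
    · exact h
  have hL : E * N ≤ L := by
    by_contra hcon
    have a1 : (L+1).choose (i+1) ≤ (E*N)^(i+1) :=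
      (Nat.choose_le_pow _ _).trans (Nat.pow_le_pow_left (by omega) _)
    have a2 : N^(i+2) ≤ 2^(i+2) * ((i+2).factorial * N.choose (i+2)) := by
      have b1 : (N + 1 - (i+2))^(i+2) ≤ (i+2).factorial * N.choose (i+2) := by
        have := Nat.pow_sub_le_descFactorial N (i+2)
        rwa [Nat.descFactorial_eq_factorial_mul_choose] at this
      calc N^(i+2) ≤ (2 * (N+1-(i+2)))^(i+2) := Nat.pow_le_pow_left (by omega) _
        _ = 2^(i+2) * (N+1-(i+2))^(i+2) := by rw [mul_pow]
        _ ≤ _ := by gcongr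
    have a3 : N.choose (i+2) ≤ D * (E*N)^(i+1) := by
      calc N.choose (i+2) ≤ D * q1 := hq.trans hq1
        _ ≤ D * (E*N)^(i+1) := by gcongr; omega
    have a4 : N^(i+1) * N ≤ N^(i+1) * (2^(i+2) * (i+2).factorial * D * E^(i+1)) := by
      calc N^(i+1) * N = N^(i+2) := by ring
        _ ≤ 2^(i+2) * ((i+2).factorial * N.choose (i+2)) := a2
        _ ≤ 2^(i+2) * ((i+2).factorial * (D * (E*N)^(i+1))) := by gcongr
        _ = _ := by rw [mul_pow]; ring
    have := Nat.le_of_mul_le_mul_left a4 (by positivity)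
    omega
  have hEN : E ≤ E * N := Nat.le_mul_of_pos_right _ hNpos
  have hL2 : 2 * (i+1) ≤ L := by
    have : 2 * (i+1) ≤ E := Nat.le_add_left _ _
    omega
  have h3 : L.choose (i+2) ≤ phi i q1 := by
    rw [← phi_choose]; exact phi_mono i h1
  have h4 : L.choose (i+2) * (i+2) = L.choose (i+1) * (L - (i+1)) := Nat.choose_succ_right_eq L (i+1)
  have h5 : (L+1).choose (i+1) ≤ 2 * L.choose (i+1) := by
    have e1 : (L+1).choose (i+1) = L.choose i + L.choose (i+1) := Nat.choose_succ_succ' _ _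
    have e2 : L.choose (i+1) * (i+1) = L.choose i * (L - i) := Nat.choose_succ_right_eq L i
    have e3 : L.choose i * (i+1) ≤ L.choose i * (L - i) := by gcongr; omega
    have : L.choose i ≤ L.choose (i+1) := by
      rw [← e2] at e3
      exact Nat.le_of_mul_le_mul_right e3 (by omega)
    omega
  have h6 : 2 * (i+2) * D * D * N ≤ L - (i+1) := by
    have e1 : E * N = 2 * (i+2) * D * D * N + 2 * (i+1) * N := by simp only [E]; ring
    have e2 : (i+1) * 1 ≤ 2 * (i+1) * N := by nlinarith
    omega
  have h7 : (2 * (i+2) * D) * (D * N * q) ≤ (2 * (i+2) * D) * phi i q1 := by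
    calc (2 * (i+2) * D) * (D * N * q) = q * (2 * (i+2) * D * D * N) := by ring
      _ ≤ (D * q1) * (L - (i+1)) := by gcongr
      _ ≤ (D * (2 * L.choose (i+1))) * (L - (i+1)) := by gcongr; omega
      _ = 2 * D * (L.choose (i+1) * (L - (i+1))) := by ring
      _ = 2 * D * (L.choose (i+2) * (i+2)) := by rw [h4]
      _ ≤ 2 * D * (phi i q1 * (i+2)) := by gcongr
      _ = _ := by ring
  exact Nat.le_of_mul_le_mul_left h7 (by positivity)

lemma choose_two_add (p q : ℕ) : (p+q).choose 2 = p.choose 2 + q.choose 2 + p * q := by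
  induction q with
  | zero => simp
  | succ q ih =>
    have e1 : (p+q+1).choose 2 = (p+q).choose 1 + (p+q).choose 2 := Nat.choose_succ_succ' _ _
    have e2 : (q+1).choose 2 = q.choose 1 + q.choose 2 := Nat.choose_succ_succ' _ _
    rw [← add_assoc, e1, e2, ih]
    simp only [Nat.choose_one_right]
    ring

lemma phi_gain (i M : ℕ) : ∃ l0, ∀ p q, l0 ≤ q → q ≤ p →
    phi i p + phi i q + M * q ≤ phi i (p + q) := by
  cases i with
  | zero =>
    refine ⟨M, fun p q h1 h2 => ?_⟩
    simp only [phi]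
    rw [choose_two_add]
    have : M * q ≤ p * q := by gcongr; omega
    omega
  | succ i =>
    obtain ⟨N0, hN0⟩ := phi_superlinear i (4*(i+3))
    let N1 := N0 + M + 2*(i+2)*(i+3)*M + i
    refine ⟨N1.choose (i+2) + 1, fun p q h1 h2 => ?_⟩
    obtain ⟨N, a1, a2⟩ := exists_level (i+2) q (by omega)
    have hNN : N1 ≤ N := by
      by_contra hcon
      have : (N+1).choose (i+2) ≤ N1.choose (i+2) := Nat.choose_le_choose _ (by omega)
      omega
    obtain ⟨q1, q2, mid, G, b1, b2, b3⟩ := phi_blocks i N p q (by omega)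
    have hup := phi_upper (i+1) (N+1) q a2.le
    have e1 : N + 1 - (i+1+1) ≤ N - i := by omega
    have hup1 : (i+3) * phi (i+1) q ≤ q * (N - i) :=
      hup.trans (Nat.mul_le_mul_left _ e1)
    have hup2 : phi (i+1) q ≤ q * N := by
      have : q * (N - i) ≤ q * N := by gcongr; omega
      nlinarith [Nat.zero_le (phi (i+1) q), Nat.zero_le i, Nat.zero_le (i * phi (i+1) q)]
    have hbig : ∀ x, q ≤ 4*(i+3) * x → phi (i+1) q + M * q ≤ phi i x := by
      intro x hx
      have := hN0 N (by omega) q x a1 hx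
      have hM : M ≤ N := by omega
      have : q * N + M * q ≤ 4*(i+3)*N*q := by
        have t1 : M * q ≤ N * q := by gcongr
        nlinarith [Nat.zero_le (i*N*q), Nat.zero_le (N*q)]
      omega
    by_cases c1 : q ≤ 4*(i+3) * q1
    · have := hbig q1 c1
      omega
    by_cases c2 : q ≤ 4*(i+3) * q2
    · have := hbig q2 c2
      omega
    have hG : phi (i+1) q + M * q ≤ G := by
      obtain ⟨a, ha⟩ : ∃ a, a = N - i := ⟨_, rfl⟩
      rw [← ha] at b3 hup1
      have ha2 : 2*(i+2)*(i+3)*M ≤ a := by omega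
      have hmid : (2*(i+2)+1) * q ≤ 2*(i+3) * mid := by
        push Not at c1 c2
        nlinarith
      have s1 : a * ((2*(i+2)+1) * q) ≤ 2*(i+3) * ((i+2) * G) := by
        calc a * ((2*(i+2)+1) * q) ≤ a * (2*(i+3) * mid) := by gcongr
          _ = 2*(i+3) * (a * mid) := by ring
          _ ≤ _ := by gcongr
      have s2 : 2*(i+2) * ((i+3) * phi (i+1) q) ≤ 2*(i+2) * (q * a) := by gcongr
      have s3 : (2*(i+2)*(i+3)*M) * q ≤ a * q := by gcongr
      have s4 : (2*(i+2)*(i+3)) * (phi (i+1) q + M * q) ≤ (2*(i+2)*(i+3)) * G := by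
        calc (2*(i+2)*(i+3)) * (phi (i+1) q + M * q)
            = 2*(i+2) * ((i+3) * phi (i+1) q) + (2*(i+2)*(i+3)*M) * q := by ring
          _ ≤ 2*(i+2) * (q * a) + a * q := by gcongr
          _ = a * ((2*(i+2)+1) * q) := by ring
          _ ≤ 2*(i+3) * ((i+2) * G) := s1
          _ = _ := by ring
      exact Nat.le_of_mul_le_mul_left s4 (by positivity)
    omega

open Finset in
lemma clean_family (k t : ℕ) (hk : 1 ≤ k) (𝒜 ℬ : Finset (Finset ℕ))
    (hval : ∀ A ∈ 𝒜, k ≤ #(ℬ.filter (fun B => B ⊆ A))) (h : t * #ℬ < #𝒜) :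
    ∃ ℬ' ⊆ ℬ, ℬ'.Nonempty ∧ ∀ B ∈ ℬ',
      t ≤ #(𝒜.filter (fun A => B ⊆ A ∧ k ≤ #(ℬ'.filter (fun B => B ⊆ A)))) := by
  let a : Finset (Finset ℕ) → ℕ := fun X => #(𝒜.filter (fun A => k ≤ #(X.filter (fun B => B ⊆ A))))
  obtain ⟨X, hX, hmax⟩ := exists_max_image ℬ.powerset
    (fun X => (a X : ℤ) - t * #X) ⟨ℬ, by simp⟩
  have h1 := hmax ℬ (by simp)
  have h2 : a ℬ = #𝒜 := by
    simp only [a]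
    rw [filter_true_of_mem hval]
  refine ⟨X, by simpa using hX, ?_, ?_⟩
  · rw [nonempty_iff_ne_empty]
    rintro rfl
    have h3 : a ∅ = 0 := by
      simp only [a, filter_empty, card_empty]
      rw [card_eq_zero, filter_eq_empty_iff]
      intro A _
      omega
    rw [h3, h2] at h1
    simp only [card_empty] at h1
    zify at h
    push_cast at h1
    linarith
  · intro B hB
    have h3 := hmax (X.erase B) (by
      rw [mem_powerset] at hX ⊢
      exact (erase_subset _ _).trans hX)
    rw [card_erase_of_mem hB] at h3
    have hpos : 1 ≤ #X := card_pos.2 ⟨B, hB⟩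
    rw [Nat.cast_sub hpos] at h3
    have h4 : a X ≤ a (X.erase B) +
        #(𝒜.filter (fun A => B ⊆ A ∧ k ≤ #(X.filter (fun B => B ⊆ A)))) := by
      refine le_trans (card_le_card ?_) (card_union_le _ _)
      intro A hA
      rw [mem_filter] at hA
      rw [mem_union, mem_filter, mem_filter]
      by_cases hBA : B ⊆ A
      · right
        exact ⟨hA.1, hBA, hA.2⟩
      · left
        refine ⟨hA.1, hA.2.trans (card_le_card ?_)⟩
        intro C hC
        rw [mem_filter] at hC ⊢
        refine ⟨mem_erase.2 ⟨?_, hC.1⟩, hC.2⟩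
        rintro rfl
        exact hBA hC.2
    zify at h4
    zify
    push_cast at h3
    linarith

open Finset in
lemma facet_eq (r : ℕ) (hr : 1 ≤ r) (A B : Finset ℕ) (hA : #A = r) (hB : #B = r - 1) (h : B ⊆ A) :
    ∃ x ∈ A, B = A.erase x := by
  have h1 : #(A \ B) = 1 := by rw [card_sdiff_of_subset h]; omega
  obtain ⟨x, hx⟩ := card_eq_one.1 h1
  have hx' : x ∈ A \ B := by rw [hx]; simp
  rw [mem_sdiff] at hx'
  refine ⟨x, hx'.1, ?_⟩
  apply eq_of_subset_of_card_le
  · intro y hy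
    exact mem_erase.2 ⟨fun h => hx'.2 (h ▸ hy), h hy⟩
  · rw [card_erase_of_mem hx'.1]; omega

open Finset in
lemma facets_card (r : ℕ) (hr : 1 ≤ r) (A : Finset ℕ) (ℬ : Finset (Finset ℕ)) (hA : #A = r)
    (hB : ∀ B ∈ ℬ, #B = r - 1) :
    #(ℬ.filter (fun B => B ⊆ A)) ≤ #(A.filter (fun x => A.erase x ∈ ℬ)) := by
  refine le_trans (card_le_card ?_) (card_image_le (f := fun x => A.erase x))
  intro B hB'
  rw [mem_filter] at hB'
  obtain ⟨x, hx, rfl⟩ := facet_eq r hr A B hA (hB B hB'.1) hB'.2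
  exact mem_image_of_mem _ (mem_filter.2 ⟨hx, hB'.1⟩)

open Finset in
/-- Members of `ℬ` at distance `j` from `B₀` whose new elements avoid `W`. -/
def reach (ℬ : Finset (Finset ℕ)) (B₀ W : Finset ℕ) (j : ℕ) : Finset (Finset ℕ) :=
  ℬ.filter (fun P => #(P \ B₀) = j ∧ Disjoint (P \ B₀) W)

open Finset in
lemma reach_step (r k t w j : ℕ) (hr : 1 ≤ r) (hj : j + 2 ≤ k) (𝒜 ℬ : Finset (Finset ℕ))
    (hA : ∀ A ∈ 𝒜, #A = r) (hB : ∀ B ∈ ℬ, #B = r - 1)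
    (hdeg : ∀ B ∈ ℬ, t ≤ #(𝒜.filter (fun A => B ⊆ A ∧ k ≤ #(ℬ.filter (fun B => B ⊆ A)))))
    (B₀ W : Finset ℕ) (hB₀ : B₀ ∈ ℬ) (hW : #W ≤ w) :
    #(reach ℬ B₀ W j) * (t - (j + w)) ≤ #(reach ℬ B₀ W (j+1)) * ((j+1) * (j+1)) := by
  classical
  let rel : Finset ℕ → Finset ℕ → Prop := fun P P' =>
    ∃ y ∈ P' \ B₀, ∃ x ∈ B₀ \ P', P = insert x (P'.erase y)
  apply card_mul_le_card_mul rel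
  · intro P hP
    simp only [reach, mem_filter] at hP
    obtain ⟨hPB, hPj, hPW⟩ := hP
    set 𝒜P := 𝒜.filter (fun A => P ⊆ A ∧ k ≤ #(ℬ.filter (fun B => B ⊆ A))) with h𝒜P
    have hd : t ≤ #𝒜P := hdeg P hPB
    set bad := (W ∪ (B₀ \ P)).image (fun y => insert y P) with hbad
    have hbadc : #bad ≤ j + w := by
      have e1 : #(B₀ \ P) = j := by
        rw [← hPj]
        exact card_sdiff_comm (by rw [hB _ hB₀, hB _ hPB])
      calc #bad ≤ #(W ∪ (B₀ \ P)) := card_image_le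
        _ ≤ #W + #(B₀ \ P) := card_union_le _ _
        _ ≤ j + w := by omega
    have hY : t - (j + w) ≤ #(𝒜P \ bad) := by
      have := le_card_sdiff bad 𝒜P
      omega
    have key : ∀ A ∈ 𝒜P \ bad, ∃ P', P' ∈ reach ℬ B₀ W (j+1) ∧ rel P P' ∧ A = P ∪ P' := by
      intro A hAm
      rw [mem_sdiff, h𝒜P, mem_filter] at hAm
      obtain ⟨⟨hA𝒜, hPA, hkA⟩, hnb⟩ := hAm
      have hAc := hA A hA𝒜
      obtain ⟨y, hyA, hyP⟩ := facet_eq r hr A P hAc (hB P hPB) hPA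
      have hyP' : y ∉ P := by rw [hyP]; simp
      have hins : insert y P = A := by rw [hyP, insert_erase hyA]
      have hyW : y ∉ W := fun h => hnb (by
        rw [hbad, mem_image]; exact ⟨y, mem_union_left _ h, hins⟩)
      have hyB₀ : y ∉ B₀ := fun h => hnb (by
        rw [hbad, mem_image]
        exact ⟨y, mem_union_right _ (mem_sdiff.2 ⟨h, hyP'⟩), hins⟩)
      have hX := hkA.trans (facets_card r hr A ℬ hAc hB)
      have hex : ∃ x ∈ A.filter (fun x => A.erase x ∈ ℬ), x ∉ insert y (P \ B₀) := by
        apply exists_mem_notMem_of_card_lt_card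
        have := card_insert_le y (P \ B₀)
        omega
      obtain ⟨x, hx, hxn⟩ := hex
      rw [mem_filter] at hx
      rw [mem_insert, mem_sdiff, not_or, not_and_not_right] at hxn
      have hxP : x ∈ P := by
        rw [← hins, mem_insert] at hx
        exact hx.1.resolve_left hxn.1
      have hxB := hxn.2 hxP
      have hsd : A.erase x \ B₀ = insert y (P \ B₀) := by
        rw [← hins]
        ext z
        simp only [mem_sdiff, mem_erase, mem_insert]
        grind
      refine ⟨A.erase x, ?_, ?_, ?_⟩
      · simp only [reach, mem_filter]
        refine ⟨hx.2, ?_, ?_⟩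
        · rw [hsd, card_insert_of_notMem (by simp [hyP']), hPj]
        · rw [hsd, disjoint_insert_left]
          exact ⟨hyW, hPW⟩
      · refine ⟨y, by rw [hsd]; simp, x, by simp [hxB], ?_⟩
        rw [← hins]
        ext z
        simp only [mem_erase, mem_insert]
        grind
      · rw [← hins]
        ext z
        simp only [mem_erase, mem_insert, mem_union]
        grind
    choose! g hg using key
    refine hY.trans (card_le_card_of_injOn g ?_ ?_)
    · intro A hAm
      rw [mem_coe, mem_bipartiteAbove]
      exact ⟨(hg A hAm).1, (hg A hAm).2.1⟩
    · intro A hAm A' hAm' hEq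
      rw [(hg A hAm).2.2, (hg A' hAm').2.2, hEq]
  · intro P' hP'
    simp only [reach, mem_filter] at hP'
    obtain ⟨hPB, hPj, hPW⟩ := hP'
    have e1 : #(B₀ \ P') = j + 1 := by
      rw [← hPj]
      exact card_sdiff_comm (by rw [hB _ hB₀, hB _ hPB])
    calc _ ≤ #(((P' \ B₀) ×ˢ (B₀ \ P')).image (fun z => insert z.2 (P'.erase z.1))) := by
          apply card_le_card
          intro P hP
          rw [mem_bipartiteBelow] at hP
          obtain ⟨y, hy, x, hx, hxy⟩ := hP.2
          rw [mem_image]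
          exact ⟨(y, x), mem_product.2 ⟨hy, hx⟩, hxy.symm⟩
      _ ≤ #((P' \ B₀) ×ˢ (B₀ \ P')) := card_image_le
      _ = _ := by rw [card_product, hPj, e1]

open Finset in
lemma reach_card (r k t w : ℕ) (hr : 1 ≤ r) (𝒜 ℬ : Finset (Finset ℕ))
    (hA : ∀ A ∈ 𝒜, #A = r) (hB : ∀ B ∈ ℬ, #B = r - 1)
    (hdeg : ∀ B ∈ ℬ, t ≤ #(𝒜.filter (fun A => B ⊆ A ∧ k ≤ #(ℬ.filter (fun B => B ⊆ A)))))
    (B₀ W : Finset ℕ) (hB₀ : B₀ ∈ ℬ) (hW : #W ≤ w) (j : ℕ) (hj : j + 1 ≤ k) :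
    (t - (k + w))^j ≤ #(reach ℬ B₀ W j) * (k*k)^j := by
  induction j with
  | zero =>
    simp only [pow_zero, mul_one]
    exact card_pos.2 ⟨B₀, by simp [reach, hB₀]⟩
  | succ j ih =>
    have h1 := ih (by omega)
    have h2 := reach_step r k t w j hr (by omega) 𝒜 ℬ hA hB hdeg B₀ W hB₀ hW
    calc (t - (k + w))^(j+1) = (t - (k+w))^j * (t - (k+w)) := pow_succ _ _
      _ ≤ (#(reach ℬ B₀ W j) * (k*k)^j) * (t - (j+w)) := by
          gcongr
          omega
      _ = (#(reach ℬ B₀ W j) * (t - (j+w))) * (k*k)^j := by ring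
      _ ≤ (#(reach ℬ B₀ W (j+1)) * ((j+1) * (j+1))) * (k*k)^j := by gcongr
      _ ≤ (#(reach ℬ B₀ W (j+1)) * (k * k)) * (k*k)^j := by gcongr <;> omega
      _ = _ := by ring

open Finset in
lemma pigeon (r k Q b : ℕ) (ℬ : Finset (Finset ℕ)) (hb : #ℬ ≤ b) (hne : ℬ.Nonempty)
    (hB : ∀ B ∈ ℬ, #B = r - 1)
    (hreach : ∀ B ∈ ℬ, ∀ W : Finset ℕ, #W ≤ (k+1)*(k-1) → Q ≤ #(reach ℬ B W (k-1)))
    (s : ℕ) (hs : s ≤ k + 1) :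
    ∃ (Ps : ℕ → Finset ℕ) (𝒢 : Finset (Finset ℕ)), 𝒢 ⊆ ℬ ∧ #ℬ * Q^s ≤ #𝒢 * b^s ∧
      ∀ B ∈ 𝒢, (∀ a < s, #(Ps a \ B) = k - 1 ∧ #(Ps a) = r - 1) ∧
        ∀ a < s, ∀ a' < a, Disjoint (Ps a \ B) (Ps a' \ B) := by
  classical
  induction s with
  | zero => exact ⟨fun _ => ∅, ℬ, subset_rfl, by simp, by simp⟩
  | succ s ih =>
    obtain ⟨Ps, 𝒢, h1, h2, h3⟩ := ih (by omega)
    let Wf : Finset ℕ → Finset ℕ := fun B => (range s).biUnion (fun a => Ps a \ B)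
    let rel : Finset ℕ → Finset ℕ → Prop := fun B P => P ∈ reach ℬ B (Wf B) (k-1)
    obtain ⟨P, hP, hmax⟩ := exists_max_image ℬ (fun P => #(𝒢.bipartiteBelow rel P)) hne
    have hcount : #𝒢 * Q ≤ #ℬ * #(𝒢.bipartiteBelow rel P) := by
      apply card_mul_le_card_mul rel
      · intro B hBG
        have hW : #(Wf B) ≤ (k+1)*(k-1) := by
          calc #(Wf B) ≤ #(range s) * (k-1) := by
                apply card_biUnion_le_card_mul
                intro a ha
                exact ((h3 B hBG).1 a (mem_range.1 ha)).1.le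
            _ ≤ _ := by
                rw [card_range]
                gcongr
                omega
        refine (hreach B (h1 hBG) (Wf B) hW).trans (card_le_card ?_)
        intro P hP
        rw [mem_bipartiteAbove]
        exact ⟨(mem_filter.1 hP).1, hP⟩
      · intro P' hP'
        exact hmax P' hP'
    refine ⟨Function.update Ps s P, 𝒢.bipartiteBelow rel P,
      (filter_subset _ _).trans h1, ?_, ?_⟩
    · calc #ℬ * Q^(s+1) = (#ℬ * Q^s) * Q := by ring
        _ ≤ (#𝒢 * b^s) * Q := by gcongr
        _ = (#𝒢 * Q) * b^s := by ring
        _ ≤ (#ℬ * #(𝒢.bipartiteBelow rel P)) * b^s := by gcongr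
        _ ≤ (b * #(𝒢.bipartiteBelow rel P)) * b^s := by gcongr
        _ = _ := by ring
    · intro B hBG
      rw [mem_bipartiteBelow] at hBG
      obtain ⟨hBG, hrel⟩ := hBG
      simp only [rel, reach, mem_filter] at hrel
      obtain ⟨g1, g2⟩ := h3 B hBG
      constructor
      · intro a ha
        by_cases has : a = s
        · subst has
          simp only [Function.update_self]
          exact ⟨hrel.2.1, hB P hP⟩
        · rw [Function.update_of_ne has]
          exact g1 a (by omega)
      · intro a ha a' ha'
        rw [Function.update_of_ne (show a' ≠ s by omega)]
        by_cases has : a = s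
        · subst has
          simp only [Function.update_self]
          refine disjoint_of_subset_right ?_ hrel.2.2
          exact subset_biUnion_of_mem (fun a => Ps a \ B) (mem_range.2 ha')
        · rw [Function.update_of_ne has]
          exact g2 a (by omega) a' ha'

open Finset in
lemma dominant (r k t Q : ℕ) (hk : 2 ≤ k) (hkr : k ≤ r) (𝒜 ℬ : Finset (Finset ℕ))
    (hv : ValidPair r k 𝒜 ℬ) (ht : t * #ℬ < #𝒜) (hQ : 0 < Q)
    (hQt : Q * (k*k)^(k-1) ≤ (t - (k + (k+1)*(k-1)))^(k-1)) :
    ∃ S : Finset ℕ, #S = r - k ∧ Q^(k+2) ≤ #(ℬ.filter (fun B => S ⊆ B)) * (#ℬ)^(k+1) := by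
  classical
  obtain ⟨hA, hB, hval⟩ := hv
  obtain ⟨ℬ', hsub, hne, hdeg⟩ := clean_family k t (by omega) 𝒜 ℬ hval ht
  have hB' : ∀ B ∈ ℬ', #B = r - 1 := fun B h => hB B (hsub h)
  have hreach : ∀ B ∈ ℬ', ∀ W : Finset ℕ, #W ≤ (k+1)*(k-1) → Q ≤ #(reach ℬ' B W (k-1)) := by
    intro B hBm W hW
    have := reach_card r k t _ (by omega) 𝒜 ℬ' hA hB' hdeg B W hBm hW (k-1) (by omega)
    exact Nat.le_of_mul_le_mul_right (hQt.trans this) (by positivity)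
  have hbig : Q ≤ #ℬ' := by
    obtain ⟨B, hBm⟩ := hne
    exact (hreach B hBm ∅ (by simp)).trans (card_le_card (filter_subset _ _))
  obtain ⟨Ps, 𝒢, h1, h2, h3⟩ := pigeon r k Q #ℬ ℬ' (card_le_card hsub) hne hB' hreach (k+1) le_rfl
  have hb : 0 < #ℬ := lt_of_lt_of_le (card_pos.2 hne) (card_le_card hsub)
  have hGne : 𝒢.Nonempty := by
    rw [← card_pos]
    by_contra hcon
    have : #𝒢 = 0 := by omega
    rw [this, zero_mul] at h2
    have : 0 < #ℬ' * Q^(k+1) := Nat.mul_pos (card_pos.2 hne) (by positivity)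
    omega
  let M := ((range (k+1)).biUnion Ps).filter (fun x => 2 ≤ #((range (k+1)).filter (fun a => x ∈ Ps a)))
  have hMB : ∀ B ∈ 𝒢, M ⊆ B := by
    intro B hBG x hx
    by_contra hxB
    have h4 := (mem_filter.1 hx).2
    obtain ⟨a, ha, a', ha', hne⟩ := one_lt_card.1 h4
    rw [mem_filter, mem_range] at ha ha'
    obtain ⟨_, g2⟩ := h3 B hBG
    have key : ∀ a < k+1, ∀ a' < a, x ∈ Ps a → x ∈ Ps a' → False := by
      intro a ha a' ha' m1 m2
      exact disjoint_left.1 (g2 a ha a' ha') (mem_sdiff.2 ⟨m1, hxB⟩) (mem_sdiff.2 ⟨m2, hxB⟩)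
    rcases lt_or_gt_of_ne hne with h | h
    · exact key a' ha'.1 a h ha'.2 ha.2
    · exact key a ha.1 a' h ha.2 ha'.2
  have hMc : r - k ≤ #M := by
    obtain ⟨B, hBG⟩ := hGne
    have hBc := hB' B (h1 hBG)
    have h5 : #(B \ M) * k ≤ #(range (k+1)) * (k-1) := by
      apply card_mul_le_card_mul (fun x a => x ∉ Ps a)
      · intro x hx
        rw [mem_sdiff] at hx
        have h6 : #((range (k+1)).filter (fun a => x ∈ Ps a)) ≤ 1 := by
          by_contra hcon
          apply hx.2
          rw [mem_filter]
          refine ⟨?_, by omega⟩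
          have : ((range (k+1)).filter (fun a => x ∈ Ps a)).Nonempty := by
            rw [← card_pos]; omega
          obtain ⟨a, ha⟩ := this
          rw [mem_filter] at ha
          exact mem_biUnion.2 ⟨a, ha⟩
        have h7 := card_filter_add_card_filter_not (s := range (k+1)) (fun a => x ∈ Ps a)
        rw [card_range] at h7
        have h8 : bipartiteAbove (fun x a => x ∉ Ps a) (range (k+1)) x
          = (range (k+1)).filter (fun a => ¬ x ∈ Ps a) := rfl
        rw [h8]
        omega
      · intro a ha
        obtain ⟨c1, c2⟩ := (h3 B hBG).1 a (mem_range.1 ha)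
        have : #(B \ Ps a) = k - 1 := by
          rw [← c1]
          exact card_sdiff_comm (by omega)
        rw [← this]
        apply card_le_card
        intro x hx
        rw [mem_bipartiteBelow] at hx
        exact mem_sdiff.2 ⟨(mem_sdiff.1 hx.1).1, hx.2⟩
    rw [card_range] at h5
    have h9 : #(B \ M) ≤ k - 1 := by
      obtain ⟨d, rfl⟩ : ∃ d, k = d + 1 := ⟨k - 1, by omega⟩
      simp only [Nat.add_sub_cancel] at h5 ⊢
      by_contra hcon
      have : (d+1) * (d+1) ≤ #(B \ M) * (d+1) := by
        gcongr
        omega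
      nlinarith
    rw [card_sdiff_of_subset (hMB B hBG)] at h9
    omega
  obtain ⟨S, hSM, hSc⟩ := exists_subset_card_eq hMc
  refine ⟨S, hSc, ?_⟩
  calc Q^(k+2) = Q * Q^(k+1) := by ring
    _ ≤ #ℬ' * Q^(k+1) := by gcongr
    _ ≤ #𝒢 * (#ℬ)^(k+1) := h2
    _ ≤ _ := by
      gcongr
      intro B hBG
      exact mem_filter.2 ⟨hsub (h1 hBG), hSM.trans (hMB B hBG)⟩

open Finset in
lemma dominant_main (i : ℕ) : ∃ K b1 : ℕ, 0 < K ∧ ∀ r, i + 2 ≤ r → ∀ 𝒜 ℬ : Finset (Finset ℕ),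
    ValidPair r (i+2) 𝒜 ℬ → b1 ≤ #ℬ → phi i #ℬ ≤ #𝒜 →
    ∃ S : Finset ℕ, #S = r - (i+2) ∧ #ℬ ≤ K * #(ℬ.filter (fun B => S ⊆ B)) := by
  obtain ⟨k, hk⟩ : ∃ k, k = i + 2 := ⟨_, rfl⟩
  have hkpos : 0 < k := by omega
  let w := (k+1)*(k-1)
  let E := 8*k^3
  let n0 := 2*(2*k*(k+w)+k) + 4*k^3 + 2*k
  refine ⟨(E^(k-1))^(k+2), n0.choose (i+1) + 1, by positivity, ?_⟩
  intro r hr 𝒜 ℬ hv hb hphi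
  rw [← hk] at hr hv ⊢
  obtain ⟨n, a1, a2⟩ := exists_level (i+1) #ℬ (by omega)
  have hn : n0 ≤ n := by
    by_contra hcon
    have : (n+1).choose (i+1) ≤ n0.choose (i+1) := Nat.choose_le_choose _ (by omega)
    omega
  have hk3 : 0 < 4*k^3 := by have : 0 < k := by omega
                             positivity
  obtain ⟨u, hu⟩ : ∃ u, u = (n+1)/(4*k^3) := ⟨_, rfl⟩
  have hu1 : 4*k^3*u ≤ n+1 := by rw [hu]; exact Nat.mul_div_le _ _
  have hu2 : n + 1 < 4*k^3*(u+1) := by rw [hu]; exact Nat.lt_mul_div_succ _ hk3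
  have hupos : 1 ≤ u := by
    rw [hu]
    exact (Nat.one_le_div_iff hk3).2 (by omega)
  let t := u*(k*k) + (k+w)
  have htpos : 0 < t := by omega
  have ht1 : 2*k*t ≤ n - (i+1) := by
    have e1 : 2*k*t = 2*(k^3*u) + 2*k*(k+w) := by simp only [t]; ring
    have e2 : 4*k^3*u = 4*(k^3*u) := by ring
    omega
  have h2n : (n+1).choose (i+1) ≤ 2 * n.choose (i+1) := by
    have e1 : (n+1).choose (i+1) = n.choose i + n.choose (i+1) := Nat.choose_succ_succ' _ _
    have e2 : n.choose (i+1) * (i+1) = n.choose i * (n - i) := Nat.choose_succ_right_eq n i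
    have e3 : n.choose i * (i+1) ≤ n.choose i * (n - i) := by gcongr; omega
    have : n.choose i ≤ n.choose (i+1) := by
      rw [← e2] at e3
      exact Nat.le_of_mul_le_mul_right e3 (by omega)
    omega
  have ht2 : t * (n+1).choose (i+1) ≤ n.choose (i+2) := by
    have e1 : n.choose (i+2) * (i+2) = n.choose (i+1) * (n - (i+1)) := Nat.choose_succ_right_eq n (i+1)
    rw [← hk] at e1
    have : k * (t * (n+1).choose (i+1)) ≤ k * n.choose (i+2) := by
      calc k * (t * (n+1).choose (i+1)) ≤ k * (t * (2 * n.choose (i+1))) := by gcongr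
        _ = n.choose (i+1) * (2*k*t) := by ring
        _ ≤ n.choose (i+1) * (n - (i+1)) := by gcongr
        _ = n.choose k * k := e1.symm
        _ = k * n.choose (i+2) := by rw [hk]; ring
    exact Nat.le_of_mul_le_mul_left this (by omega)
  have ht3 : t * #ℬ < #𝒜 := by
    calc t * #ℬ < t * (n+1).choose (i+1) := by gcongr
      _ ≤ n.choose (i+2) := ht2
      _ = phi i (n.choose (i+1)) := (phi_choose i n).symm
      _ ≤ phi i #ℬ := phi_mono i a1
      _ ≤ _ := hphi
  obtain ⟨S, hS, hS2⟩ := dominant r k t (u^(k-1)) (by omega) hr 𝒜 ℬ hv ht3 (by positivity) (by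
    have : t - (k + (k+1)*(k-1)) = u * (k*k) := by simp only [t, w]; omega
    rw [this, mul_pow u])
  refine ⟨S, hS, ?_⟩
  have hbE : #ℬ ≤ E^(k-1) * u^(k-1) := by
    have e0 : k - 1 = i + 1 := by omega
    calc #ℬ ≤ (n+1).choose (i+1) := a2.le
      _ ≤ (n+1)^(i+1) := Nat.choose_le_pow _ _
      _ ≤ (E*u)^(i+1) := by
          apply Nat.pow_le_pow_left
          have : 4*k^3*(u+1) ≤ E*u := by
            simp only [E]
            nlinarith
          omega
      _ = _ := by rw [mul_pow, e0]
  have hbpos : 0 < #ℬ := by omega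
  have hfin : #ℬ^(k+1) * #ℬ ≤ #ℬ^(k+1) * ((E^(k-1))^(k+2) * #(ℬ.filter (fun B => S ⊆ B))) := by
    calc #ℬ^(k+1) * #ℬ = #ℬ^(k+2) := by ring
      _ ≤ (E^(k-1) * u^(k-1))^(k+2) := Nat.pow_le_pow_left hbE _
      _ = (E^(k-1))^(k+2) * (u^(k-1))^(k+2) := by rw [mul_pow]
      _ ≤ (E^(k-1))^(k+2) * (#(ℬ.filter (fun B => S ⊆ B)) * #ℬ^(k+1)) := by gcongr
      _ = _ := by ring
  exact Nat.le_of_mul_le_mul_left hfin (by positivity)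

open Finset in
lemma crude (r k : ℕ) (hr : 1 ≤ r) (hk : 2 ≤ k) (𝒜 ℬ : Finset (Finset ℕ))
    (hv : ValidPair r k 𝒜 ℬ) : #𝒜 ≤ #ℬ ^ 2 := by
  classical
  obtain ⟨hA, hB, hval⟩ := hv
  calc #𝒜 ≤ #((ℬ ×ˢ ℬ).image (fun z => z.1 ∪ z.2)) := by
        apply card_le_card
        intro A hAm
        have h1 : 1 < #(ℬ.filter (fun B => B ⊆ A)) := lt_of_lt_of_le (by omega) (hval A hAm)
        obtain ⟨B, hB1, C, hC1, hne⟩ := one_lt_card.1 h1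
        rw [mem_filter] at hB1 hC1
        rw [mem_image]
        refine ⟨(B, C), mem_product.2 ⟨hB1.1, hC1.1⟩, ?_⟩
        obtain ⟨x, hx, rfl⟩ := facet_eq r hr A B (hA A hAm) (hB B hB1.1) hB1.2
        obtain ⟨y, hy, rfl⟩ := facet_eq r hr A C (hA A hAm) (hB C hC1.1) hC1.2
        have hxy : x ≠ y := by
          rintro rfl
          exact hne rfl
        ext z
        simp only [mem_union, mem_erase]
        grind
    _ ≤ #(ℬ ×ˢ ℬ) := card_image_le
    _ = _ := by rw [card_product, sq]

open Finset in
lemma f_lower (i r b : ℕ) (hr : i + 2 ≤ r) : phi i b ≤ f r (i+2) b := by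
  classical
  obtain ⟨𝒜, ℬ, h1, h2, h3, h4, h5⟩ := kk_lower i (b + i + 1) b (by
    have := choose_ge_sub (b + i + 1) (i+1) (by omega)
    omega)
  let n := b + i + 1
  let S := (range (r - (i+2))).image (fun x => n + x)
  have hSc : #S = r - (i+2) := by
    rw [card_image_of_injective _ (fun a b h => by simpa using h), card_range]
  have hSd : ∀ X, X ⊆ range n → Disjoint X S := by
    intro X hX
    rw [disjoint_left]
    intro x hx hxS
    have := mem_range.1 (hX hx)
    obtain ⟨y, _, hy⟩ := mem_image.1 hxS
    omega
  have hinj : ∀ X Y, X ⊆ range n → Y ⊆ range n → X ∪ S = Y ∪ S → X = Y := by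
    intro X Y hX hY h
    have e1 := union_sdiff_cancel_right (hSd X hX)
    have e2 := union_sdiff_cancel_right (hSd Y hY)
    rw [← e1, ← e2, h]
  have hAr : ∀ A ∈ 𝒜, A ⊆ range n ∧ #A = i+2 := fun A h => mem_powersetCard.1 (h1 h)
  have hBr : ∀ A ∈ ℬ, A ⊆ range n ∧ #A = i+1 := fun A h => mem_powersetCard.1 (h2 h)
  unfold f
  apply le_csSup
  · refine ⟨b^2, ?_⟩
    rintro a ⟨𝒜', ℬ', hv, hb, ha⟩
    rw [← ha, ← hb]
    exact crude r (i+2) (by omega) (by omega) 𝒜' ℬ' hv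
  · refine ⟨𝒜.image (fun A => A ∪ S), ℬ.image (fun A => A ∪ S), ⟨?_, ?_, ?_⟩, ?_, ?_⟩
    · intro A' hA'
      obtain ⟨A, hA, rfl⟩ := mem_image.1 hA'
      rw [card_union_of_disjoint (hSd A (hAr A hA).1), (hAr A hA).2, hSc]
      omega
    · intro A' hA'
      obtain ⟨A, hA, rfl⟩ := mem_image.1 hA'
      rw [card_union_of_disjoint (hSd A (hBr A hA).1), (hBr A hA).2, hSc]
      omega
    · intro A' hA'
      obtain ⟨A, hA, rfl⟩ := mem_image.1 hA'
      rw [← (hAr A hA).2]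
      refine card_le_card_of_injOn (fun x => A.erase x ∪ S) ?_ ?_
      · intro x hx
        rw [mem_coe, mem_filter]
        refine ⟨mem_image_of_mem _ (h5 A hA x hx), ?_⟩
        exact union_subset_union_left (erase_subset _ _)
      · intro x hx y hy hxy
        have := hinj _ _ ((erase_subset x A).trans (hAr A hA).1)
          ((erase_subset y A).trans (hAr A hA).1) hxy
        exact (erase_injOn A) hx hy this
    · rw [card_image_of_injOn, h3]
      intro X hX Y hY h
      exact hinj X Y (hBr X hX).1 (hBr Y hY).1 h
    · rw [card_image_of_injOn, h4]
      intro X hX Y hY h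
      exact hinj X Y (hAr X hX).1 (hAr Y hY).1 h

open Finset in
lemma decomp (i r : ℕ) (hr : i + 2 ≤ r) (𝒜 ℬ : Finset (Finset ℕ)) (S : Finset ℕ)
    (hv : ValidPair r (i+2) 𝒜 ℬ) (hS : #S = r - (i+2)) :
    ValidPair r (i+2) (𝒜.filter (fun A => ¬ S ⊆ A)) (ℬ.filter (fun B => ¬ S ⊆ B)) ∧
    #𝒜 ≤ phi i #(ℬ.filter (fun B => S ⊆ B)) + #(ℬ.filter (fun B => ¬ S ⊆ B))
      + #(𝒜.filter (fun A => ¬ S ⊆ A)) := by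
  classical
  obtain ⟨hA, hB, hval⟩ := hv
  constructor
  · refine ⟨fun A h => hA A (mem_filter.1 h).1, fun B h => hB B (mem_filter.1 h).1, ?_⟩
    intro A h
    rw [mem_filter] at h
    refine (hval A h.1).trans (card_le_card ?_)
    intro B hBm
    rw [mem_filter] at hBm
    rw [mem_filter, mem_filter]
    exact ⟨⟨hBm.1, fun hs => h.2 (hs.trans hBm.2)⟩, hBm.2⟩
  · let 𝒜S := 𝒜.filter (fun A => S ⊆ A)
    let good := 𝒜S.filter (fun A => ∀ x ∈ A \ S, A.erase x ∈ ℬ)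
    let rest := 𝒜S.filter (fun A => ¬ ∀ x ∈ A \ S, A.erase x ∈ ℬ)
    have c1 : #𝒜S + #(𝒜.filter (fun A => ¬ S ⊆ A)) = #𝒜 :=
      card_filter_add_card_filter_not (s := 𝒜) (fun A => S ⊆ A)
    have c2 : #good + #rest = #𝒜S := card_filter_add_card_filter_not (s := 𝒜S) _
    have hgood : #good ≤ phi i #(ℬ.filter (fun B => S ⊆ B)) := by
      have e1 : #(good.image (fun A => A \ S)) = #good := by
        apply card_image_of_injOn
        intro X hX Y hY h
        have hX' := (mem_filter.1 (mem_filter.1 hX).1).2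
        have hY' := (mem_filter.1 (mem_filter.1 hY).1).2
        have h' : X \ S = Y \ S := h
        rw [← sdiff_union_of_subset hX', ← sdiff_union_of_subset hY', h']
      rw [← e1]
      refine (kk_upper i _ ((ℬ.filter (fun B => S ⊆ B)).image (fun A => A \ S)) ?_ ?_).trans
        (phi_mono i card_image_le)
      · intro A' hA'
        obtain ⟨A, hAm, rfl⟩ := mem_image.1 hA'
        have h1 := mem_filter.1 (mem_filter.1 hAm).1
        rw [card_sdiff_of_subset h1.2, hA A h1.1, hS]
        omega
      · intro A' hA' x hx
        obtain ⟨A, hAm, rfl⟩ := mem_image.1 hA'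
        have h0 := mem_filter.1 hAm
        have h1 := mem_filter.1 h0.1
        rw [mem_image]
        refine ⟨A.erase x, mem_filter.2 ⟨h0.2 x hx, ?_⟩, ?_⟩
        · exact subset_erase.2 ⟨h1.2, (mem_sdiff.1 hx).2⟩
        · exact erase_sdiff_comm _ _ _
    have hrest : #rest ≤ #(ℬ.filter (fun B => ¬ S ⊆ B)) := by
      have key : ∀ A ∈ rest, ∃ B, B ∈ ℬ.filter (fun B => ¬ S ⊆ B) ∧ A = B ∪ S := by
        intro A hAm
        have h0 := mem_filter.1 hAm
        have h1 := mem_filter.1 h0.1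
        have hAc := hA A h1.1
        have hX := (hval A h1.1).trans (facets_card r (by omega) A ℬ hAc hB)
        have hnot : ¬ A.filter (fun x => A.erase x ∈ ℬ) ⊆ A \ S := by
          intro hsub
          apply h0.2
          have hEq := eq_of_subset_of_card_le hsub (by
            rw [card_sdiff_of_subset h1.2, hAc, hS]
            omega)
          intro x hx
          rw [← hEq] at hx
          exact (mem_filter.1 hx).2
        rw [not_subset] at hnot
        obtain ⟨x, hx, hxn⟩ := hnot
        rw [mem_filter] at hx
        have hxS : x ∈ S := by
          by_contra h
          exact hxn (mem_sdiff.2 ⟨hx.1, h⟩)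
        refine ⟨A.erase x, mem_filter.2 ⟨hx.2, fun h => ?_⟩, ?_⟩
        · exact (mem_erase.1 (h hxS)).1 rfl
        · have h2 := h1.2
          ext z
          simp only [mem_union, mem_erase]
          constructor
          · intro hz
            by_cases hzx : z = x
            · right; rw [hzx]; exact hxS
            · exact Or.inl ⟨hzx, hz⟩
          · rintro (hz | hz)
            · exact hz.2
            · exact h2 hz
      choose! g hg using key
      refine card_le_card_of_injOn g (fun A h => (hg A h).1) ?_
      intro A h A' h' hEq
      rw [(hg A h).2, (hg A' h').2, hEq]
    omega

open Finset in
/-- The gain inequality in the form needed: `p` carries a `1/K` fraction. -/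
lemma gain_use (i K : ℕ) : ∃ l0, ∀ p m, l0 ≤ p → l0 ≤ m → p + m ≤ K * p →
    phi i p + phi i m + 2 * m ≤ phi i (p + m) := by
  obtain ⟨l0, h⟩ := phi_gain i (2*K + 2)
  refine ⟨l0, fun p m hp hm hK => ?_⟩
  rcases le_total m p with hmp | hmp
  · have := h p m hm hmp
    nlinarith
  · have := h m p hp hmp
    rw [add_comm m p] at this
    nlinarith

open Finset in
lemma upper_main (i : ℕ) : ∃ K b2 l0 G : ℕ, (0 < K) ∧
    (∀ p m, l0 ≤ p → l0 ≤ m → p + m ≤ K * p → phi i p + phi i m + 2 * m ≤ phi i (p + m)) ∧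
    (∀ p m, b2 ≤ p + m → p + m ≤ K * p → l0 ≤ p ∧ 0 < p) ∧
    (∀ r, i + 2 ≤ r → ∀ 𝒜 ℬ : Finset (Finset ℕ),
      ValidPair r (i+2) 𝒜 ℬ → b2 ≤ #ℬ → phi i #ℬ ≤ #𝒜 →
      ∃ S : Finset ℕ, #S = r - (i+2) ∧ #ℬ ≤ K * #(ℬ.filter (fun B => S ⊆ B))) ∧
    (∀ r, i + 2 ≤ r → ∀ 𝒜 ℬ : Finset (Finset ℕ),
      ValidPair r (i+2) 𝒜 ℬ → #𝒜 ≤ phi i #ℬ + G) := by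
  obtain ⟨K, b1, hK, hdom⟩ := dominant_main i
  obtain ⟨l0, hl0⟩ := gain_use i K
  obtain ⟨b2, hb2⟩ : ∃ b2, b2 = b1 + K * l0 + 1 := ⟨_, rfl⟩
  have hp : ∀ p m, b2 ≤ p + m → p + m ≤ K * p → l0 ≤ p ∧ 0 < p := by
    intro p m h1 h2
    constructor
    · by_contra hcon
      have : K * p ≤ K * l0 := by gcongr; omega
      omega
    · by_contra hcon
      have : p = 0 := by omega
      subst this
      omega
  have hdom' : ∀ r, i + 2 ≤ r → ∀ 𝒜 ℬ : Finset (Finset ℕ),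
      ValidPair r (i+2) 𝒜 ℬ → b2 ≤ #ℬ → phi i #ℬ ≤ #𝒜 →
      ∃ S : Finset ℕ, #S = r - (i+2) ∧ #ℬ ≤ K * #(ℬ.filter (fun B => S ⊆ B)) :=
    fun r hr 𝒜 ℬ hv hb h => hdom r hr 𝒜 ℬ hv (by omega) h
  refine ⟨K, b2, l0, b2^2 + l0 + l0^2, hK, hl0, hp, hdom', ?_⟩
  intro r hr 𝒜 ℬ
  induction hb : #ℬ using Nat.strong_induction_on generalizing 𝒜 ℬ with
  | _ b ih =>
  intro hv
  by_cases hsmall : b < b2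
  · have h1 := crude r (i+2) (by omega) (by omega) 𝒜 ℬ hv
    have h2 : #ℬ^2 ≤ b2^2 := Nat.pow_le_pow_left (by omega) 2
    omega
  by_cases hphi : #𝒜 < phi i b
  · omega
  obtain ⟨S, hS, hSK⟩ := hdom' r hr 𝒜 ℬ hv (by omega) (by rw [hb]; omega)
  obtain ⟨hv2, hdec⟩ := decomp i r hr 𝒜 ℬ S hv hS
  have hpm : #(ℬ.filter (fun B => S ⊆ B)) + #(ℬ.filter (fun B => ¬ S ⊆ B)) = #ℬ :=
    card_filter_add_card_filter_not (s := ℬ) (fun B => S ⊆ B)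
  set p := #(ℬ.filter (fun B => S ⊆ B)) with hpdef
  set m := #(ℬ.filter (fun B => ¬ S ⊆ B)) with hmdef
  obtain ⟨g1, g2⟩ := hp p m (by omega) (by omega)
  by_cases hm : l0 ≤ m
  · have h1 := hl0 p m g1 hm (by omega)
    have h2 := ih m (by omega) _ _ hmdef.symm hv2
    have h3 : p + m = b := by omega
    rw [h3] at h1
    omega
  · have h1 := crude r (i+2) (by omega) (by omega) _ _ hv2
    have h2 : m^2 ≤ l0^2 := Nat.pow_le_pow_left (by omega) 2
    have h3 : phi i p ≤ phi i b := phi_mono i (by omega)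
    rw [← hmdef] at h1
    omega

open Finset in
theorem stmt_14 (k : ℕ) (hk : 2 ≤ k) :
    ∃ lammax b₀ : ℕ, ∀ r : ℕ, k ≤ r → ∀ 𝒜 ℬ : Finset (Finset ℕ),
      ValidPair r k 𝒜 ℬ → b₀ ≤ ℬ.card → 𝒜.card = f r k ℬ.card →
      ∃ S : Finset ℕ, ∃ 𝒟 : Finset (Finset ℕ), S.card = r - k ∧ 𝒟 ⊆ ℬ ∧
        ℬ.card - lammax ≤ 𝒟.card ∧ ∀ B ∈ 𝒟, S ⊆ B := by
  obtain ⟨i, rfl⟩ : ∃ i, k = i + 2 := ⟨k - 2, by omega⟩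
  obtain ⟨K, b2, l0, G, hK, hl0, hp, hdom, hup⟩ := upper_main i
  refine ⟨l0 + G, b2, ?_⟩
  intro r hr 𝒜 ℬ hv hb hext
  have hphi : phi i #ℬ ≤ #𝒜 := by
    rw [hext]
    exact f_lower i r _ hr
  obtain ⟨S, hS, hSK⟩ := hdom r hr 𝒜 ℬ hv hb hphi
  refine ⟨S, ℬ.filter (fun B => S ⊆ B), hS, filter_subset _ _, ?_,
    fun B h => (mem_filter.1 h).2⟩
  obtain ⟨hv2, hdec⟩ := decomp i r hr 𝒜 ℬ S hv hS
  have hpm : #(ℬ.filter (fun B => S ⊆ B)) + #(ℬ.filter (fun B => ¬ S ⊆ B)) = #ℬ :=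
    card_filter_add_card_filter_not (s := ℬ) (fun B => S ⊆ B)
  have h2 := hup r hr _ _ hv2
  set p := #(ℬ.filter (fun B => S ⊆ B)) with hpdef
  set m := #(ℬ.filter (fun B => ¬ S ⊆ B)) with hmdef
  obtain ⟨g1, g2⟩ := hp p m (by omega) (by omega)
  by_cases hm : l0 ≤ m
  · have h1 := hl0 p m g1 hm (by omega)
    rw [hpm] at h1
    omega
  · omega
end

section
/- Let r ≥ 2 and i ≥ 1 be integers and let B, B' be (r−1)-element subsets of ℕ with |B △ B'| = 2i (symmetric difference). Then the number of sequences B = B_0, B_1, ..., B_i = B' of (r−1)-element subsets of ℕ with |B_{j-1} △ B_j| = 2 for every 1 ≤ j ≤ i is at most (i!)². -/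
lemma chain_dist (i : ℕ) : ∀ (c : Fin (i + 1) → Finset ℕ),
    (∀ j : Fin i, (symmDiff (c j.castSucc) (c j.succ)).card = 2) →
    (symmDiff (c 0) (c (Fin.last i))).card ≤ 2 * i := by
  induction i with
  | zero => intro c _; simp
  | succ i ih =>
    intro c h
    have h1 := ih (fun j => c j.succ) (fun j => h j.succ)
    have h2 := h 0
    have h3 : symmDiff (c 0) (c (Fin.last (i+1))) ⊆
        symmDiff (c 0) (c 1) ∪ symmDiff (c 1) (c (Fin.last (i+1))) := symmDiff_triangle _ _ _
    have h4 := (Finset.card_le_card h3).trans (Finset.card_union_le _ _)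
    simp only [Fin.succ_zero_eq_one, Fin.succ_last, Fin.castSucc_zero] at h1 h2
    simp only [Nat.succ_eq_add_one] at h1
    omega

lemma sd_card (n i : ℕ) (B C : Finset ℕ) (hB : B.card = n) (hC : C.card = n)
    (h : (symmDiff B C).card = 2 * i) : (B \ C).card = i ∧ (C \ B).card = i := by
  have h1 : (symmDiff B C).card = (B \ C).card + (C \ B).card := by
    rw [symmDiff_def]
    exact Finset.card_union_of_disjoint disjoint_sdiff_sdiff
  have h2 := Finset.card_sdiff_add_card_inter B C
  have h3 := Finset.card_sdiff_add_card_inter C B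
  rw [Finset.inter_comm] at h3
  omega

lemma step_lem (n i : ℕ) (B C B' : Finset ℕ) (hB : B.card = n) (hC : C.card = n)
    (h1 : (symmDiff B C).card = 2) (h2 : (symmDiff C B').card ≤ 2 * i)
    (h3 : (symmDiff B B').card = 2 * (i + 1)) :
    (symmDiff C B').card = 2 * i ∧
    ∃ x ∈ B \ B', ∃ y ∈ B' \ B, C = insert y (B.erase x) := by
  obtain ⟨ha, hb⟩ := sd_card n 1 B C hB hC h1
  obtain ⟨x, hx⟩ := Finset.card_eq_one.1 ha
  obtain ⟨y, hy⟩ := Finset.card_eq_one.1 hb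
  have hx' : ∀ z, (z ∈ B ∧ z ∉ C) ↔ z = x := fun z => by
    rw [← Finset.mem_sdiff, hx, Finset.mem_singleton]
  have hy' : ∀ z, (z ∈ C ∧ z ∉ B) ↔ z = y := fun z => by
    rw [← Finset.mem_sdiff, hy, Finset.mem_singleton]
  have hxx := (hx' x).2 rfl
  have hyy := (hy' y).2 rfl
  have e : ∀ z, z ≠ x → z ≠ y → (z ∈ B ↔ z ∈ C) := fun z h h' => by
    have := hx' z; have := hy' z; tauto
  refine ⟨?_, x, ?_, y, ?_, ?_⟩
  · have hs : symmDiff B B' ⊆ insert x (insert y (symmDiff C B')) := by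
      intro z
      simp only [Finset.mem_symmDiff, Finset.mem_insert]
      have := e z
      tauto
    have := Finset.card_le_card hs
    have := Finset.card_insert_le x (insert y (symmDiff C B'))
    have := Finset.card_insert_le y (symmDiff C B')
    omega
  · rw [Finset.mem_sdiff]
    refine ⟨hxx.1, fun hm => ?_⟩
    have hs : symmDiff B B' ⊆ insert y (symmDiff C B') := by
      intro z
      simp only [Finset.mem_symmDiff, Finset.mem_insert]
      by_cases hz : z = x
      · subst hz; tauto
      have := e z
      tauto
    have := Finset.card_le_card hs
    have := Finset.card_insert_le y (symmDiff C B')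
    omega
  · rw [Finset.mem_sdiff]
    refine ⟨by_contra fun hm => ?_, hyy.2⟩
    have hs : symmDiff B B' ⊆ insert x (symmDiff C B') := by
      intro z
      simp only [Finset.mem_symmDiff, Finset.mem_insert]
      by_cases hz : z = y
      · subst hz; tauto
      have := e z
      tauto
    have := Finset.card_le_card hs
    have := Finset.card_insert_le x (symmDiff C B')
    omega
  · ext z
    simp only [Finset.mem_insert, Finset.mem_erase]
    have := hx' z; have := hy' z; tauto

lemma main_bound (n : ℕ) (B' : Finset ℕ) (hB' : B'.card = n) (i : ℕ) :
    ∀ B : Finset ℕ, B.card = n → (symmDiff B B').card = 2 * i →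
    ∃ F : Finset (Fin (i + 1) → Finset ℕ), F.card ≤ i.factorial ^ 2 ∧
      ∀ c : Fin (i + 1) → Finset ℕ, c 0 = B → c (Fin.last i) = B' → (∀ j, (c j).card = n) →
        (∀ j : Fin i, (symmDiff (c j.castSucc) (c j.succ)).card = 2) → c ∈ F := by
  classical
  induction i with
  | zero =>
    intro B _ _
    refine ⟨{fun _ => B}, by simp, ?_⟩
    intro c h0 _ _ _
    rw [Finset.mem_singleton]
    funext j
    have hj : j = 0 := Fin.ext (by simp)
    rw [hj, h0]
  | succ i ih =>
    intro B hB hd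
    obtain ⟨k1, k2⟩ := sd_card n (i+1) B B' hB hB' hd
    have ih' : ∀ C : Finset ℕ, ∃ F : Finset (Fin (i + 1) → Finset ℕ),
        F.card ≤ i.factorial ^ 2 ∧ (C.card = n → (symmDiff C B').card = 2 * i →
      ∀ c : Fin (i + 1) → Finset ℕ, c 0 = C → c (Fin.last i) = B' → (∀ j, (c j).card = n) →
        (∀ j : Fin i, (symmDiff (c j.castSucc) (c j.succ)).card = 2) → c ∈ F) := by
      intro C
      by_cases h : C.card = n ∧ (symmDiff C B').card = 2 * i
      · obtain ⟨F, hF, hF'⟩ := ih C h.1 h.2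
        exact ⟨F, hF, fun _ _ => hF'⟩
      · exact ⟨∅, by simp, fun a b => absurd ⟨a, b⟩ h⟩
    choose F hF hF' using ih'
    refine ⟨((B \ B') ×ˢ (B' \ B)).biUnion fun p =>
      (F (insert p.2 (B.erase p.1))).image
        (fun c => (Fin.cons B c : Fin (i + 1 + 1) → Finset ℕ)), ?_, ?_⟩
    · refine (Finset.card_biUnion_le_card_mul _ _ (i.factorial ^ 2)
        (fun p _ => Finset.card_image_le.trans (hF _))).trans ?_
      rw [Finset.card_product, k1, k2, Nat.factorial_succ]
      apply le_of_eq
      ring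
    · intro c h0 hl hc hs
      have t := chain_dist i (fun j => c j.succ) (fun j => hs j.succ)
      have h2 := hs 0
      simp only [Fin.succ_last, Fin.castSucc_zero, Nat.succ_eq_add_one, hl, h0] at t h2
      obtain ⟨q, x, hx, y, hy, e⟩ := step_lem n i B _ B' hB (hc _) h2 t hd
      rw [Finset.mem_biUnion]
      refine ⟨(x, y), Finset.mem_product.2 ⟨hx, hy⟩, ?_⟩
      rw [Finset.mem_image]
      refine ⟨Fin.tail c, ?_, ?_⟩
      · rw [← e]
        exact hF' _ (hc _) q _ rfl hl (fun j => hc _) (fun j => hs j.succ)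
      · rw [← h0]; exact Fin.cons_self_tail c

theorem stmt_15 (r i : ℕ) (hr : 2 ≤ r) (hi : 1 ≤ i) (B B' : Finset ℕ)
    (hB : B.card = r - 1) (hB' : B'.card = r - 1)
    (hd : (symmDiff B B').card = 2 * i) :
    Set.ncard {c : Fin (i + 1) → Finset ℕ |
        c 0 = B ∧ c (Fin.last i) = B' ∧ (∀ j, (c j).card = r - 1) ∧
        ∀ j : Fin i, (symmDiff (c j.castSucc) (c j.succ)).card = 2} ≤
      i.factorial ^ 2 := by
  obtain ⟨F, hF, hF'⟩ := main_bound (r - 1) B' hB' i B hB hd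
  refine le_trans ?_ hF
  rw [← Set.ncard_coe_finset F]
  refine Set.ncard_le_ncard ?_ F.finite_toSet
  rintro c ⟨h0, h1, h2, h3⟩
  exact hF' c h0 h1 h2 h3
end

section
/- Let r ≥ 2 be an integer, let A_1 ≠ A_2 be r-element subsets of ℕ, and let c, B_1, B_1', B_2, B_2' be five pairwise distinct (r−1)-element subsets of ℕ with c ⊂ A_1, c ⊂ A_2, B_1 ⊂ A_1, B_1' ⊂ A_1, B_2 ⊂ A_2, B_2' ⊂ A_2. Then at least two of the four pairs (B_1,B_2), (B_1,B_2'), (B_1',B_2), (B_1',B_2') consist of sets at distance 2 from each other, i.e. have symmetric difference of size 4. -/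
theorem aux_erase {r : ℕ} (hr : 2 ≤ r) {A B : Finset ℕ} (hA : A.card = r) (hB : B.card = r - 1)
    (h : B ⊆ A) : ∃ a ∈ A, B = A.erase a := by
  have h1 : (A \ B).card = 1 := by
    rw [Finset.card_sdiff_of_subset h]; omega
  obtain ⟨a, ha⟩ := Finset.card_eq_one.1 h1
  have key : ∀ z, (z ∈ A ∧ z ∉ B) ↔ z = a := by
    intro z
    rw [← Finset.mem_sdiff, ha, Finset.mem_singleton]
  refine ⟨a, ((key a).2 rfl).1, ?_⟩
  ext z
  rw [Finset.mem_erase]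
  have := key z
  have := @h z
  tauto

theorem aux_symm {c : Finset ℕ} {x y a b : ℕ} (hx : x ∉ c) (hy : y ∉ c) (hxy : x ≠ y)
    (ha : a ∈ c) (hb : b ∈ c) (hab : a ≠ b) :
    (symmDiff ((insert x c).erase a) ((insert y c).erase b)).card = 4 := by
  have : symmDiff ((insert x c).erase a) ((insert y c).erase b) = {x, y, a, b} := by
    ext z
    simp only [Finset.mem_symmDiff, Finset.mem_erase, Finset.mem_insert, Finset.mem_singleton]
    grind
  rw [this]
  have h1 : x ≠ a := by grind
  have h2 : x ≠ b := by grind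
  have h3 : y ≠ a := by grind
  have h4 : y ≠ b := by grind
  simp [*]


theorem stmt_16 (r : ℕ) (hr : 2 ≤ r) (A₁ A₂ c B₁ B₁' B₂ B₂' : Finset ℕ)
    (hA : A₁ ≠ A₂) (hA₁ : A₁.card = r) (hA₂ : A₂.card = r)
    (hdistinct : [c, B₁, B₁', B₂, B₂'].Pairwise (· ≠ ·))
    (hc : c.card = r - 1) (h₁ : B₁.card = r - 1) (h₁' : B₁'.card = r - 1)
    (h₂ : B₂.card = r - 1) (h₂' : B₂'.card = r - 1)
    (hcA₁ : c ⊆ A₁) (hcA₂ : c ⊆ A₂) (hB₁ : B₁ ⊆ A₁) (hB₁' : B₁' ⊆ A₁)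
    (hB₂ : B₂ ⊆ A₂) (hB₂' : B₂' ⊆ A₂) :
    2 ≤ ([(B₁, B₂), (B₁, B₂'), (B₁', B₂), (B₁', B₂')].countP
        fun p => (symmDiff p.1 p.2).card == 4) := by
  obtain ⟨x, hx, ecx⟩ := aux_erase hr hA₁ hc hcA₁
  obtain ⟨y, hy, ecy⟩ := aux_erase hr hA₂ hc hcA₂
  obtain ⟨a, ha, ea⟩ := aux_erase hr hA₁ h₁ hB₁
  obtain ⟨a', ha', ea'⟩ := aux_erase hr hA₁ h₁' hB₁'
  obtain ⟨b, hb, eb⟩ := aux_erase hr hA₂ h₂ hB₂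
  obtain ⟨b', hb', eb'⟩ := aux_erase hr hA₂ h₂' hB₂'
  have hxc : x ∉ c := by rw [ecx]; simp
  have hyc : y ∉ c := by rw [ecy]; simp
  have e1 : A₁ = insert x c := by rw [ecx, Finset.insert_erase hx]
  have e2 : A₂ = insert y c := by rw [ecy, Finset.insert_erase hy]
  have hxy : x ≠ y := by
    rintro rfl
    exact hA (e1.trans e2.symm)
  simp only [List.pairwise_cons, List.mem_cons, List.not_mem_nil, or_false, forall_eq_or_imp,
    forall_eq] at hdistinct
  obtain ⟨⟨n1, n2, n3, n4⟩, ⟨n5, -, -⟩, -, n6, -⟩ := hdistinct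
  have hac : a ∈ c := by
    rw [ecx, Finset.mem_erase]
    exact ⟨fun h => n1 (by rw [ecx, ea, h]), ha⟩
  have hac' : a' ∈ c := by
    rw [ecx, Finset.mem_erase]
    exact ⟨fun h => n2 (by rw [ecx, ea', h]), ha'⟩
  have hbc : b ∈ c := by
    rw [ecy, Finset.mem_erase]
    exact ⟨fun h => n3 (by rw [ecy, eb, h]), hb⟩
  have hbc' : b' ∈ c := by
    rw [ecy, Finset.mem_erase]
    exact ⟨fun h => n4 (by rw [ecy, eb', h]), hb'⟩
  have haa : a ≠ a' := fun h => n5 (by rw [ea, ea', h])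
  have hbb : b ≠ b' := fun h => n6 (by rw [eb, eb', h])
  have k1 : a ≠ b → (symmDiff B₁ B₂).card = 4 := fun h => by
    rw [ea, eb, e1, e2]; exact aux_symm hxc hyc hxy hac hbc h
  have k2 : a ≠ b' → (symmDiff B₁ B₂').card = 4 := fun h => by
    rw [ea, eb', e1, e2]; exact aux_symm hxc hyc hxy hac hbc' h
  have k3 : a' ≠ b → (symmDiff B₁' B₂).card = 4 := fun h => by
    rw [ea', eb, e1, e2]; exact aux_symm hxc hyc hxy hac' hbc h
  have k4 : a' ≠ b' → (symmDiff B₁' B₂').card = 4 := fun h => by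
    rw [ea', eb', e1, e2]; exact aux_symm hxc hyc hxy hac' hbc' h
  clear ea ea' eb eb' ecx ecy e1 e2
  simp only [List.countP_cons, List.countP_nil, beq_iff_eq]
  split_ifs <;> first | omega | (exfalso; grind)
end

section
/- For all integers k ≥ 2 and 1 ≤ i ≤ k−1 there exists a constant C > 0 (depending only on k) such that the following holds for all integers r ≥ k. Let (𝒜, ℬ) be a k-valid pair with |𝒜| = a ≥ 1 and |ℬ| = b ≥ 2, and let ≺ be a relation between ℬ and 𝒜 such that B ≺ A implies B ∈ ℬ, A ∈ 𝒜, B ⊂ A, and such that every A ∈ 𝒜 satisfies B ≺ A for exactly k sets B. Then the number of sequences (B_0, A_1, B_1, A_2, ..., A_i, B_i) with B_{j-1} ≺ A_j and B_j ≺ A_j for all 1 ≤ j ≤ i and with |B_0 △ B_i| = 2i is at least ((k−1)!/(k−i−1)!)·(a k / b)^i·b·(1 − C·b·ln(b)/(k·a)). -/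
namespace WW
set_option linter.unusedSectionVars false
open Finset Classical

theorem exists_T {β : Type*} [Fintype β] (X Y : Finset β) (f g : β → ℕ)
    (hf : Set.InjOn f X) (hg : Set.InjOn g Y) (hc : X.card = Y.card) :
    ∃ T : β → β → Prop, (∀ x ∈ X, (Y.filter (fun y => T x y)).card = X.card - 1) ∧
      (∀ y ∈ Y, (X.filter (fun x => T x y)).card = X.card - 1) ∧
      ∀ x ∈ X, ∀ y ∈ Y, T x y → f x ≠ g y := by
  have key : ∃ e : X ≃ Y, ∀ x : X, ∀ y ∈ Y, f x = g y → (e x : β) = y := by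
    let p : X → β := fun x => if h : ∃ y ∈ Y, f x = g y then h.choose else x
    let s : Finset X := univ.filter (fun x => ∃ y ∈ Y, f x = g y)
    have hp : ∀ x ∈ s, p x ∈ Y ∧ f x = g (p x) := by
      intro x hx
      have h : ∃ y ∈ Y, f x = g y := by simpa [s] using hx
      simp only [p, dif_pos h]
      exact h.choose_spec
    obtain ⟨e, he⟩ := Finset.exists_equiv_extend_of_card_eq (α := X) (t := Y) (by simpa using hc)
      (s := s) (f := p) (by
        intro y hy
        obtain ⟨x, hx, rfl⟩ := Finset.mem_image.1 hy
        exact (hp x hx).1) (by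
        intro x hx x' hx' h
        have h1 := (hp x hx).2
        have h2 := (hp x' hx').2
        rw [h, ← h2] at h1
        exact Subtype.ext (hf x.2 x'.2 h1))
    refine ⟨e, fun x y hy hxy => ?_⟩
    have hx : x ∈ s := by simp only [s, mem_filter, mem_univ, true_and]; exact ⟨y, hy, hxy⟩
    rw [he x hx]
    exact hg (hp x hx).1 hy (by rw [← (hp x hx).2, hxy])
  obtain ⟨e, he⟩ := key
  refine ⟨fun x y => ∀ h : x ∈ X, y ≠ (e ⟨x, h⟩ : β), ?_, ?_, ?_⟩
  · intro x hx
    rw [hc]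
    refine (congrArg card ?_).trans (Finset.card_erase_of_mem (e ⟨x, hx⟩).2)
    ext y
    simp [hx, and_comm]
  · intro y hy
    refine (congrArg card ?_).trans (Finset.card_erase_of_mem (e.symm ⟨y, hy⟩).2)
    ext x
    simp only [mem_filter, mem_erase]
    constructor
    · rintro ⟨hx, h⟩
      refine ⟨?_, hx⟩
      rintro rfl
      apply h hx
      simp
    · rintro ⟨h, hx⟩
      refine ⟨hx, ?_⟩
      rintro hx' rfl
      apply h
      simp
  · intro x hx y hy hT hxy
    exact hT hx (he ⟨x, hx⟩ y hy hxy).symm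

noncomputable def TT {β : Type*} [Fintype β] (X Y : Finset β) (f g : β → ℕ) : β → β → Prop :=
  if h : Set.InjOn f X ∧ Set.InjOn g Y ∧ X.card = Y.card then
    (exists_T X Y f g h.1 h.2.1 h.2.2).choose else fun _ _ => False

theorem TT_spec {β : Type*} [Fintype β] (X Y : Finset β) (f g : β → ℕ)
    (hf : Set.InjOn f X) (hg : Set.InjOn g Y) (hc : X.card = Y.card) :
    (∀ x ∈ X, (Y.filter (fun y => TT X Y f g x y)).card = X.card - 1) ∧
      (∀ y ∈ Y, (X.filter (fun x => TT X Y f g x y)).card = X.card - 1) ∧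
      ∀ x ∈ X, ∀ y ∈ Y, TT X Y f g x y → f x ≠ g y := by
  have h : Set.InjOn f X ∧ Set.InjOn g Y ∧ X.card = Y.card := ⟨hf, hg, hc⟩
  have : TT X Y f g = (exists_T X Y f g h.1 h.2.1 h.2.2).choose := by
    unfold TT; rw [dif_pos h]
  rw [this]
  exact (exists_T X Y f g h.1 h.2.1 h.2.2).choose_spec

section
variable {α β : Type} [Fintype β] (N : β → α → Prop) (δ : β → α → ℕ)

/-- The selected set of walks with `m` steps. -/
noncomputable def SS : (m : ℕ) → (Fin (m + 1) → β) → (Fin m → α) → Prop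
  | 0, _, _ => True
  | 1, v, u => N (v 0) (u 0) ∧ N (v 1) (u 0) ∧ v 0 ≠ v 1
  | m + 2, v, u =>
    SS (m + 1) (Fin.init v) (Fin.init u) ∧ SS (m + 1) (Fin.tail v) (Fin.tail u) ∧
    TT (univ.filter fun b => SS (m + 1) (Fin.cons b (Fin.tail (Fin.init v))) (Fin.init u))
      (univ.filter fun b => SS (m + 1) (Fin.snoc (Fin.init (Fin.tail v)) b) (Fin.tail u))
      (fun b => δ b (u 0)) (fun b => δ b (u (Fin.last _))) (v 0) (v (Fin.last _))

theorem SS_iff (m : ℕ) (s : Fin (m + 1) → β) (t : Fin m → α) (b b' : β) (A A' : α) :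
    SS N δ (m + 2) (Fin.cons b (Fin.snoc s b' : Fin (m + 2) → β))
      (Fin.cons A (Fin.snoc t A' : Fin (m + 1) → α)) ↔
    SS N δ (m + 1) (Fin.cons b s) (Fin.cons A t) ∧ SS N δ (m + 1) (Fin.snoc s b') (Fin.snoc t A') ∧
    TT (univ.filter fun b => SS N δ (m + 1) (Fin.cons b s) (Fin.cons A t))
      (univ.filter fun b => SS N δ (m + 1) (Fin.snoc s b) (Fin.snoc t A'))
      (fun b => δ b A) (fun b => δ b A') b b' := by
  have e1 : (Fin.init (Fin.cons b (Fin.snoc s b' : Fin (m + 2) → β) : Fin (m + 3) → β))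
      = Fin.cons b s := by
    rw [Fin.cons_snoc_eq_snoc_cons, Fin.init_snoc]
  have e2 : (Fin.init (Fin.cons A (Fin.snoc t A' : Fin (m + 1) → α) : Fin (m + 2) → α))
      = Fin.cons A t := by
    rw [Fin.cons_snoc_eq_snoc_cons, Fin.init_snoc]
  have e3 : (Fin.cons b (Fin.snoc s b' : Fin (m + 2) → β) : Fin (m + 3) → β) (Fin.last _) = b' := by
    rw [Fin.cons_snoc_eq_snoc_cons, Fin.snoc_last]
  have e4 : (Fin.cons A (Fin.snoc t A' : Fin (m + 1) → α) : Fin (m + 2) → α) (Fin.last _) = A' := by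
    rw [Fin.cons_snoc_eq_snoc_cons, Fin.snoc_last]
  rw [SS, e1, e2, e3, e4]
  simp only [Fin.tail_cons, Fin.init_snoc, Fin.cons_zero]

theorem SS_init {m : ℕ} {v : Fin (m + 2) → β} {u : Fin (m + 1) → α} (h : SS N δ (m + 1) v u) :
    SS N δ m (Fin.init v) (Fin.init u) := by
  cases m with
  | zero => simp [SS]
  | succ m => rw [SS] at h; exact h.1

theorem SS_tail {m : ℕ} {v : Fin (m + 2) → β} {u : Fin (m + 1) → α} (h : SS N δ (m + 1) v u) :
    SS N δ m (Fin.tail v) (Fin.tail u) := by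
  cases m with
  | zero => simp [SS]
  | succ m => rw [SS] at h; exact h.2.1

theorem SS_N : ∀ {m : ℕ} {v : Fin (m + 1) → β} {u : Fin m → α}, SS N δ m v u →
    ∀ j, N (v j.castSucc) (u j) ∧ N (v j.succ) (u j)
  | 0, v, u, h, j => j.elim0
  | 1, v, u, h, j => by
    rw [SS] at h
    have : j = 0 := Subsingleton.elim _ _
    subst this
    exact ⟨h.1, h.2.1⟩
  | m + 2, v, u, h, j => by
    cases j using Fin.cases with
    | zero => exact SS_N (SS_init N δ h) 0
    | succ j => exact SS_N (SS_tail N δ h) j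


theorem SS_count (k : ℕ) (hk : ∀ A, (univ.filter fun B => N B A).card = k)
    (h1 : ∀ A B B', N B A → N B' A → δ B A = δ B' A → B = B')
    : ∀ m : ℕ,
    (∀ v u, SS N δ m v u → ∀ A, N (v (Fin.last m)) A →
      (univ.filter fun B => SS N δ (m + 1) (Fin.snoc v B) (Fin.snoc u A)).card = k - m - 1) ∧
    (∀ v u, SS N δ m v u → ∀ A, N (v 0) A →
      (univ.filter fun B => SS N δ (m + 1) (Fin.cons B v) (Fin.cons A u)).card = k - m - 1) := by
  intro m
  induction m with
  | zero =>
    constructor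
    · intro v u _ A hA
      rw [← hk A]
      refine (congrArg card ?_).trans (Finset.card_erase_of_mem (a := v 0) (by simpa using hA))
      ext B
      have e0 : (Fin.snoc v B : Fin 2 → β) 0 = v 0 := Fin.snoc_castSucc (α := fun _ => β) B v 0
      have e1 : (Fin.snoc v B : Fin 2 → β) 1 = B := Fin.snoc_last (α := fun _ => β) B v
      have e2 : (Fin.snoc u A : Fin 1 → α) 0 = A := Fin.snoc_last (α := fun _ => α) A u
      have hA' : N (v 0) A := hA
      simp only [mem_filter, mem_univ, true_and, mem_erase, SS, e0, e1, e2, hA']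
      tauto
    · intro v u _ A hA
      rw [← hk A]
      refine (congrArg card ?_).trans (Finset.card_erase_of_mem (a := v 0) (by simpa using hA))
      ext B
      have e1 : (Fin.cons B v : Fin 2 → β) 1 = v 0 := rfl
      simp only [mem_filter, mem_univ, true_and, mem_erase, SS, e1, Fin.cons_zero, hA]
      tauto
  | succ m ih =>
    have main : ∀ (s : Fin (m + 1) → β) (t : Fin m → α) (A A' : α), SS N δ m s t → N (s 0) A →
        N (s (Fin.last m)) A' →
        (∀ b, SS N δ (m + 1) (Fin.cons b s) (Fin.cons A t) →
          (univ.filter fun b' => SS N δ (m + 2) (Fin.cons b (Fin.snoc s b' : Fin (m + 2) → β))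
            (Fin.cons A (Fin.snoc t A' : Fin (m + 1) → α))).card = k - (m + 1) - 1) ∧
        (∀ b', SS N δ (m + 1) (Fin.snoc s b') (Fin.snoc t A') →
          (univ.filter fun b => SS N δ (m + 2) (Fin.cons b (Fin.snoc s b' : Fin (m + 2) → β))
            (Fin.cons A (Fin.snoc t A' : Fin (m + 1) → α))).card = k - (m + 1) - 1) := by
      intro s t A A' hst hA hA'
      have cX := ih.2 s t hst A hA
      have cY := ih.1 s t hst A' hA'
      have sp := TT_spec (univ.filter fun b => SS N δ (m + 1) (Fin.cons b s) (Fin.cons A t))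
        (univ.filter fun b => SS N δ (m + 1) (Fin.snoc s b) (Fin.snoc t A'))
        (fun b => δ b A) (fun b => δ b A')
        (by
          intro x hx y hy h
          refine h1 A x y ?_ ?_ h
          · have := (SS_N N δ (by simpa using hx) 0).1
            simpa using this
          · have := (SS_N N δ (by simpa using hy) 0).1
            simpa using this)
        (by
          intro x hx y hy h
          refine h1 A' x y ?_ ?_ h
          · have := (SS_N N δ (by simpa using hx) (Fin.last _)).2
            simpa using this
          · have := (SS_N N δ (by simpa using hy) (Fin.last _)).2
            simpa using this)
        (cX.trans cY.symm)
      rw [cX] at sp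
      have e : k - (m + 1) - 1 = k - m - 1 - 1 := by omega
      rw [e]
      constructor
      · intro b hb
        rw [← sp.1 b (by simpa using hb)]
        congr 1
        ext b'
        simp only [mem_filter, mem_univ, true_and, SS_iff, hb]
      · intro b hb
        rw [← sp.2.1 b (by simpa using hb)]
        congr 1
        ext b'
        simp only [mem_filter, mem_univ, true_and, SS_iff, hb]
    constructor
    · intro v u hvu A hA
      have hN := (SS_N N δ hvu 0)
      have ht := SS_tail N δ hvu
      have := (main (Fin.tail v) (Fin.tail u) (u 0) A ht hN.2 hA).1 (v 0)
        (by simpa using hvu)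
      simpa only [Fin.cons_snoc_eq_snoc_cons, Fin.cons_self_tail] using this
    · intro v u hvu A hA
      have hN := (SS_N N δ hvu (Fin.last _))
      have ht := SS_init N δ hvu
      have := (main (Fin.init v) (Fin.init u) A (u (Fin.last _)) ht hA hN.1).2 (v (Fin.last _))
        (by simpa using hvu)
      simpa only [Fin.snoc_init_self] using this

theorem SS_avoid (k : ℕ) (hk : ∀ A, (univ.filter fun B => N B A).card = k)
    (h1 : ∀ A B B', N B A → N B' A → δ B A = δ B' A → B = B')
    : ∀ {m : ℕ} {v : Fin (m + 1) → β} {u : Fin m → α}, SS N δ m v u →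
    ∀ j l, j ≤ l → δ (v l.succ) (u l) ≠ δ (v j.castSucc) (u j)
  | 0, v, u, h, j, l, hjl => j.elim0
  | 1, v, u, h, j, l, hjl => by
    rw [SS] at h
    have : j = 0 := Subsingleton.elim _ _
    subst this
    have : l = 0 := Subsingleton.elim _ _
    subst this
    intro h'
    exact h.2.2 (h1 _ _ _ h.2.1 h.1 h').symm
  | m + 2, v, u, h, j, l, hjl => by
    cases l using Fin.lastCases with
    | cast l =>
      have hj : j ≠ Fin.last _ := by
        rintro rfl
        exact absurd hjl (not_le.2 (Fin.castSucc_lt_last l))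
      obtain ⟨j, rfl⟩ := Fin.exists_castSucc_eq.2 hj
      exact SS_avoid k hk h1 (SS_init N δ h) j l (by simpa using hjl)
    | last =>
      cases j using Fin.cases with
      | succ j => exact SS_avoid k hk h1 (SS_tail N δ h) j (Fin.last _) (Fin.le_last _)
      | zero =>
        obtain ⟨b, v, rfl⟩ : ∃ b v', v = Fin.cons b v' := ⟨_, _, (Fin.cons_self_tail v).symm⟩
        obtain ⟨s, b', rfl⟩ : ∃ s b', v = Fin.snoc s b' := ⟨_, _, (Fin.snoc_init_self v).symm⟩
        obtain ⟨A, u, rfl⟩ : ∃ b v', u = Fin.cons b v' := ⟨_, _, (Fin.cons_self_tail u).symm⟩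
        obtain ⟨t, A', rfl⟩ : ∃ s b', u = Fin.snoc s b' := ⟨_, _, (Fin.snoc_init_self u).symm⟩
        rw [SS_iff] at h
        obtain ⟨hb, hb', hT⟩ := h
        have hst : SS N δ m s t := by simpa using SS_tail N δ hb
        have hA : N (s 0) A := by simpa using (SS_N N δ hb 0).2
        have hA' : N (s (Fin.last _)) A' := by simpa using (SS_N N δ hb' (Fin.last _)).1
        have cX := (SS_count N δ k hk h1 m).2 s t hst A hA
        have cY := (SS_count N δ k hk h1 m).1 s t hst A' hA'
        have sp := TT_spec (univ.filter fun b => SS N δ (m + 1) (Fin.cons b s) (Fin.cons A t))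
          (univ.filter fun b => SS N δ (m + 1) (Fin.snoc s b) (Fin.snoc t A'))
          (fun b => δ b A) (fun b => δ b A')
          (by
            intro x hx y hy h
            refine h1 A x y ?_ ?_ h
            · have := (SS_N N δ (by simpa using hx) 0).1
              simpa using this
            · have := (SS_N N δ (by simpa using hy) 0).1
              simpa using this)
          (by
            intro x hx y hy h
            refine h1 A' x y ?_ ?_ h
            · have := (SS_N N δ (by simpa using hx) (Fin.last _)).2
              simpa using this
            · have := (SS_N N δ (by simpa using hy) (Fin.last _)).2
              simpa using this)
          (cX.trans cY.symm)
        have := sp.2.2 b (by simpa using hb) b' (by simpa using hb') hT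
        intro h'
        apply this
        rw [Fin.cons_snoc_eq_snoc_cons, Fin.cons_snoc_eq_snoc_cons] at h'
        simp only [Fin.succ_last, Fin.snoc_last] at h'
        rw [h']
        rfl
end

theorem sum_rot {ι κ τ : Type} [Fintype ι] [Fintype κ] [Fintype τ] (F : ι → κ → τ → ℝ) :
    ∑ a, ∑ b, ∑ c, F a b c = ∑ c, ∑ a, ∑ b, F a b c := by
  calc _ = ∑ a, ∑ c, ∑ b, F a b c := Finset.sum_congr rfl fun a _ => Finset.sum_comm
    _ = _ := Finset.sum_comm

theorem sum_snoc {γ : Type} [Fintype γ] {m : ℕ} (F : (Fin (m + 1) → γ) → ℝ) :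
    ∑ v, F v = ∑ v : Fin m → γ, ∑ B, F (Fin.snoc v B) := by
  rw [← (Fin.snocEquiv (fun _ : Fin (m + 1) => γ)).sum_comp, Fintype.sum_prod_type, Finset.sum_comm]
  rfl

theorem sum_cons {γ : Type} [Fintype γ] {m : ℕ} (F : (Fin (m + 1) → γ) → ℝ) :
    ∑ v, F v = ∑ v : Fin m → γ, ∑ B, F (Fin.cons B v) := by
  rw [← (Fin.consEquiv (fun _ : Fin (m + 1) => γ)).sum_comp, Fintype.sum_prod_type, Finset.sum_comm]
  rfl

theorem sum_snoc2 {α β : Type} [Fintype α] [Fintype β] {m : ℕ}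
    (F : (Fin (m + 2) → β) → (Fin (m + 1) → α) → ℝ) :
    ∑ v, ∑ u, F v u = ∑ v, ∑ u, ∑ A, ∑ B, F (Fin.snoc v B) (Fin.snoc u A) := by
  rw [sum_snoc]
  refine Finset.sum_congr rfl fun v _ => ?_
  rw [Finset.sum_comm, sum_snoc]

theorem sum_cons2 {α β : Type} [Fintype α] [Fintype β] {m : ℕ}
    (F : (Fin (m + 2) → β) → (Fin (m + 1) → α) → ℝ) :
    ∑ v, ∑ u, F v u = ∑ v, ∑ u, ∑ A, ∑ B, F (Fin.cons B v) (Fin.cons A u) := by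
  rw [sum_cons]
  refine Finset.sum_congr rfl fun v _ => ?_
  rw [Finset.sum_comm, sum_cons]

section
variable {α β : Type} [Fintype α] [Fintype β] (N : β → α → Prop) (δ : β → α → ℕ)

noncomputable def deg (B : β) : ℝ := ((univ.filter fun A => N B A).card : ℝ)

theorem deg_pos {B : β} {A : α} (h : N B A) : 1 ≤ deg N B := by
  unfold deg
  have : 0 < (univ.filter fun A => N B A).card := Finset.card_pos.2 ⟨A, by simpa using h⟩
  exact_mod_cast this

theorem deg_nonneg (B : β) : 0 ≤ deg N B := by unfold deg; positivity

noncomputable def mu (m : ℕ) (v : Fin (m + 1) → β) (u : Fin m → α) : ℝ :=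
  if SS N δ m v u then (∏ j, (deg N (v j))⁻¹) * deg N (v 0) * deg N (v (Fin.last m)) else 0

theorem mu_nonneg (m : ℕ) (v : Fin (m + 1) → β) (u : Fin m → α) : 0 ≤ mu N δ m v u := by
  unfold mu
  split_ifs
  · have := fun B => deg_nonneg N B
    have h2 : 0 ≤ ∏ j, (deg N (v j))⁻¹ := Finset.prod_nonneg fun j _ => inv_nonneg.2 (this _)
    exact mul_nonneg (mul_nonneg h2 (this _)) (this _)
  · exact le_rfl

theorem mu_snoc (m : ℕ) (v : Fin (m + 1) → β) (u : Fin m → α) (A : α) (B : β) :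
    mu N δ (m + 1) (Fin.snoc v B) (Fin.snoc u A) =
      if SS N δ (m + 1) (Fin.snoc v B) (Fin.snoc u A) then
        (∏ j, (deg N (v j))⁻¹) * deg N (v 0) else 0 := by
  unfold mu
  split_ifs with h
  · have hB : 1 ≤ deg N B := by
      have := (SS_N N δ h (Fin.last _)).2
      simp only [Fin.succ_last, Fin.snoc_last] at this
      exact deg_pos N this
    have e0 : (Fin.snoc v B : Fin (m + 2) → β) 0 = v 0 :=
      Fin.snoc_castSucc (α := fun _ => β) B v 0
    rw [Fin.prod_univ_castSucc, e0]
    simp only [Fin.snoc_castSucc, Fin.snoc_last]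
    field_simp
  · rfl

theorem mu_cons (m : ℕ) (v : Fin (m + 1) → β) (u : Fin m → α) (A : α) (B : β) :
    mu N δ (m + 1) (Fin.cons B v) (Fin.cons A u) =
      if SS N δ (m + 1) (Fin.cons B v) (Fin.cons A u) then
        (∏ j, (deg N (v j))⁻¹) * deg N (v (Fin.last m)) else 0 := by
  unfold mu
  split_ifs with h
  · have hB : 1 ≤ deg N B := by
      have := (SS_N N δ h 0).1
      simp only [Fin.castSucc_zero, Fin.cons_zero] at this
      exact deg_pos N this
    have e0 : (Fin.cons B v : Fin (m + 2) → β) (Fin.last _) = v (Fin.last _) := rfl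
    rw [Fin.prod_univ_succ, e0]
    simp only [Fin.cons_succ, Fin.cons_zero]
    field_simp
  · rfl


theorem snoc_marg (k : ℕ) (hk : ∀ A, (univ.filter fun B => N B A).card = k)
    (h1 : ∀ A B B', N B A → N B' A → δ B A = δ B' A → B = B')
    (m : ℕ) (H : (Fin (m + 1) → β) → (Fin m → α) → α → ℝ) :
    ∑ v, ∑ u, mu N δ (m + 1) v u * H (Fin.init v) (Fin.init u) (u (Fin.last m)) =
      ((k - m - 1 : ℕ) : ℝ) * ∑ v, ∑ u, if SS N δ m v u then
        (∏ j, (deg N (v j))⁻¹) * deg N (v 0) *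
          ∑ A, (if N (v (Fin.last m)) A then H v u A else 0) else 0 := by
  rw [sum_snoc2, Finset.mul_sum]
  refine Finset.sum_congr rfl fun v _ => ?_
  rw [Finset.mul_sum]
  refine Finset.sum_congr rfl fun u _ => ?_
  simp only [Fin.init_snoc, Fin.snoc_last, mu_snoc]
  by_cases hS : SS N δ m v u
  · rw [if_pos hS, Finset.mul_sum, Finset.mul_sum]
    refine Finset.sum_congr rfl fun A _ => ?_
    by_cases hA : N (v (Fin.last m)) A
    · rw [if_pos hA, ← (SS_count N δ k hk h1 m).1 v u hS A hA, ← Finset.sum_mul,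
        ← Finset.sum_filter, Finset.sum_const, nsmul_eq_mul]
      ring
    · rw [if_neg hA]
      simp only [mul_zero]
      refine Finset.sum_eq_zero fun B _ => ?_
      rw [if_neg, zero_mul]
      intro h
      have := (SS_N N δ h (Fin.last _)).1
      simp only [Fin.snoc_castSucc, Fin.snoc_last] at this
      exact hA this
  · rw [if_neg hS, mul_zero]
    refine Finset.sum_eq_zero fun A _ => Finset.sum_eq_zero fun B _ => ?_
    rw [if_neg, zero_mul]
    intro h
    have := SS_init N δ h
    simp only [Fin.init_snoc] at this
    exact hS this

theorem init_marg (k : ℕ) (hk : ∀ A, (univ.filter fun B => N B A).card = k)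
    (h1 : ∀ A B B', N B A → N B' A → δ B A = δ B' A → B = B')
    (m : ℕ) (G : (Fin (m + 1) → β) → (Fin m → α) → ℝ) :
    ∑ v, ∑ u, mu N δ (m + 1) v u * G (Fin.init v) (Fin.init u) =
      ((k - m - 1 : ℕ) : ℝ) * ∑ v, ∑ u, mu N δ m v u * G v u := by
  rw [snoc_marg N δ k hk h1 m (fun v u _ => G v u)]
  congr 1
  refine Finset.sum_congr rfl fun v _ => Finset.sum_congr rfl fun u _ => ?_
  unfold mu
  split_ifs
  · rw [← Finset.sum_filter, Finset.sum_const, nsmul_eq_mul]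
    unfold deg
    ring
  · simp

theorem tail_marg (k : ℕ) (hk : ∀ A, (univ.filter fun B => N B A).card = k)
    (h1 : ∀ A B B', N B A → N B' A → δ B A = δ B' A → B = B')
    (m : ℕ) (G : (Fin (m + 1) → β) → (Fin m → α) → ℝ) :
    ∑ v, ∑ u, mu N δ (m + 1) v u * G (Fin.tail v) (Fin.tail u) =
      ((k - m - 1 : ℕ) : ℝ) * ∑ v, ∑ u, mu N δ m v u * G v u := by
  rw [sum_cons2, Finset.mul_sum]
  refine Finset.sum_congr rfl fun v _ => ?_
  rw [Finset.mul_sum]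
  refine Finset.sum_congr rfl fun u _ => ?_
  simp only [Fin.tail_cons, mu_cons]
  by_cases hS : SS N δ m v u
  · have e : mu N δ m v u * G v u = ∑ A, if N (v 0) A then
        (∏ j, (deg N (v j))⁻¹) * deg N (v (Fin.last m)) * G v u else 0 := by
      rw [← Finset.sum_filter, Finset.sum_const, nsmul_eq_mul, mu, if_pos hS]
      unfold deg
      ring
    rw [e, Finset.mul_sum]
    refine Finset.sum_congr rfl fun A _ => ?_
    by_cases hA : N (v 0) A
    · rw [if_pos hA, ← (SS_count N δ k hk h1 m).2 v u hS A hA, ← Finset.sum_mul,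
        ← Finset.sum_filter, Finset.sum_const, nsmul_eq_mul]
      ring
    · rw [if_neg hA]
      simp only [mul_zero]
      refine Finset.sum_eq_zero fun B _ => ?_
      rw [if_neg, zero_mul]
      intro h
      have := (SS_N N δ h 0).2
      simp only [Fin.cons_succ, Fin.cons_zero] at this
      exact hA this
  · have e : mu N δ m v u = 0 := by rw [mu, if_neg hS]
    rw [e, zero_mul, mul_zero]
    refine Finset.sum_eq_zero fun A _ => Finset.sum_eq_zero fun B _ => ?_
    rw [if_neg, zero_mul]
    intro h
    have := SS_tail N δ h
    simp only [Fin.tail_cons] at this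
    exact hS this

theorem vertex_marg (k : ℕ) (hk : ∀ A, (univ.filter fun B => N B A).card = k)
    (h1 : ∀ A B B', N B A → N B' A → δ B A = δ B' A → B = B')
    (m : ℕ) (g : β → ℝ) : ∀ j : Fin (m + 1),
    ∑ v, ∑ u, mu N δ m v u * g (v j) =
      (∏ l ∈ range m, ((k - l - 1 : ℕ) : ℝ)) * ∑ B, deg N B * g B := by
  induction m with
  | zero =>
    intro j
    have hj : j = 0 := Fin.ext (by have := j.2; simp)
    subst hj
    rw [Finset.prod_range_zero, one_mul, sum_cons]
    simp only [Fintype.sum_unique]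
    refine Finset.sum_congr rfl fun B _ => ?_
    have hm : mu N δ 0 (Fin.cons B default) default = deg N B := by
      simp only [mu, SS, if_true, Fin.last_zero, Fin.cons_zero, Fin.prod_univ_succ, Fin.prod_univ_zero]
      by_cases h : deg N B = 0
      · simp [h]
      · field_simp
    rw [hm]
    rfl
  | succ m ih =>
    intro j
    rw [Finset.prod_range_succ, mul_assoc, mul_left_comm]
    cases j using Fin.lastCases with
    | cast j =>
      rw [← ih j, ← init_marg N δ k hk h1 m (fun v _ => g (v j))]
      rfl
    | last =>
      rw [← ih (Fin.last m), ← tail_marg N δ k hk h1 m (fun v _ => g (v (Fin.last m)))]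
      rfl

theorem bad_marg (k : ℕ) (hk : ∀ A, (univ.filter fun B => N B A).card = k)
    (h1 : ∀ A B B', N B A → N B' A → δ B A = δ B' A → B = B')
    (h2 : ∀ B A A', N B A → N B A' → δ B A = δ B A' → A = A') (m : ℕ) :
    ∀ j l : Fin m, j < l →
    ∑ v, ∑ u, mu N δ m v u * (if δ (v l.castSucc) (u l) = δ (v j.succ) (u j) then 1 else 0) ≤
      (∏ l ∈ range m, ((k - l - 1 : ℕ) : ℝ)) * (Fintype.card β : ℝ) := by
  induction m with
  | zero => intro j; exact j.elim0
  | succ m ih =>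
    intro j l hjl
    have hj : j ≠ Fin.last _ := ne_of_lt (lt_of_lt_of_le hjl (Fin.le_last l))
    obtain ⟨j, rfl⟩ := Fin.exists_castSucc_eq.2 hj
    rw [Finset.prod_range_succ, mul_assoc, mul_left_comm]
    cases l using Fin.lastCases with
    | cast l =>
      have := init_marg N δ k hk h1 m
        (fun v u => (if δ (v l.castSucc) (u l) = δ (v j.succ) (u j) then 1 else 0))
      refine (le_of_eq this).trans ?_
      exact mul_le_mul_of_nonneg_left (ih j l (by simpa using hjl)) (by positivity)
    | last =>
      have := snoc_marg N δ k hk h1 m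
        (fun v u A => (if δ (v (Fin.last m)) A = δ (v j.succ) (u j) then 1 else 0))
      refine (le_of_eq this).trans ?_
      refine mul_le_mul_of_nonneg_left ?_ (by positivity)
      have hv := vertex_marg N δ k hk h1 m (fun B => (deg N B)⁻¹) (Fin.last m)
      have hP : 0 ≤ ∏ l ∈ range m, ((k - l - 1 : ℕ) : ℝ) :=
        Finset.prod_nonneg fun _ _ => Nat.cast_nonneg _
      have hle : (∏ l ∈ range m, ((k - l - 1 : ℕ) : ℝ)) * ∑ B, deg N B * (deg N B)⁻¹ ≤
          (∏ l ∈ range m, ((k - l - 1 : ℕ) : ℝ)) * (Fintype.card β : ℝ) := by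
        refine mul_le_mul_of_nonneg_left ?_ hP
        calc ∑ B, deg N B * (deg N B)⁻¹ ≤ ∑ B : β, (1 : ℝ) :=
              Finset.sum_le_sum fun B _ => mul_inv_le_one
          _ = _ := by simp
      refine le_trans ?_ (hv.le.trans hle)
      refine Finset.sum_le_sum fun v _ => Finset.sum_le_sum fun u _ => ?_
      unfold mu
      split_ifs with hS
      · have hW : 0 ≤ (∏ j, (deg N (v j))⁻¹) * deg N (v 0) :=
          mul_nonneg (Finset.prod_nonneg fun j _ => inv_nonneg.2 (deg_nonneg N _)) (deg_nonneg N _)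
        rw [mul_assoc _ (deg N (v (Fin.last m)))]
        refine mul_le_mul_of_nonneg_left ?_ hW
        have hd : 1 ≤ deg N (v (Fin.last m)) := by
          have hm : 0 < m := j.pos
          obtain ⟨m, rfl⟩ : ∃ n, m = n + 1 := ⟨m - 1, by omega⟩
          exact deg_pos N (SS_N N δ hS (Fin.last _)).2
        rw [mul_inv_cancel₀ (by linarith)]
        rw [← Finset.sum_filter, ← Finset.sum_filter, Finset.sum_const, nsmul_eq_mul, mul_one]
        have : ((univ.filter fun A => N (v (Fin.last m)) A).filter fun A =>
            δ (v (Fin.last m)) A = δ (v j.succ) (u j)).card ≤ 1 := by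
          refine Finset.card_le_one.2 fun x hx y hy => ?_
          simp only [mem_filter, mem_univ, true_and] at hx hy
          exact h2 _ _ _ hx.1 hy.1 (hx.2.trans hy.2.symm)
        exact_mod_cast this
      · simp

theorem main_count (k : ℕ) (hk : ∀ A, (univ.filter fun B => N B A).card = k)
    (h1 : ∀ A B B', N B A → N B' A → δ B A = δ B' A → B = B')
    (h2 : ∀ B A A', N B A → N B A' → δ B A = δ B A' → A = A')
    (hdb : ∀ B, deg N B ≤ (Fintype.card β : ℝ)) (n : ℕ) (d : ℝ) (hd : 1 ≤ d)
    (hE : d * (Fintype.card β : ℝ) = ∑ B, deg N B) (hb : 1 ≤ Fintype.card β) :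
    (∏ l ∈ range (n + 1), ((k - l - 1 : ℕ) : ℝ)) * d ^ n *
      ((∑ B, deg N B) - ((n : ℝ) + 1) ^ 2 * (Fintype.card β : ℝ) *
        (1 + n * Real.log (Fintype.card β))) ≤
    ∑ v, ∑ u, if SS N δ (n + 1) v u ∧
      ∀ j l : Fin (n + 1), j < l → δ (v l.castSucc) (u l) ≠ δ (v j.succ) (u j)
      then (1 : ℝ) else 0 := by
  set b : ℝ := (Fintype.card β : ℝ) with hbdef
  set Z : ℝ := ∏ l ∈ range (n + 1), ((k - l - 1 : ℕ) : ℝ) with hZ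
  have hZ0 : 0 ≤ Z := Finset.prod_nonneg fun _ _ => Nat.cast_nonneg _
  have hb1 : 1 ≤ b := by rw [hbdef]; exact_mod_cast hb
  have hlb : 0 ≤ Real.log b := Real.log_nonneg hb1
  have hQ : 0 ≤ 1 + n * Real.log b := by positivity
  let L : β → ℝ := fun B => Real.log (deg N B / d)
  let bad : (Fin (n + 2) → β) → (Fin (n + 1) → α) → Fin (n + 1) → Fin (n + 1) → ℝ :=
    fun v u j l => if j < l then
      (if δ (v l.castSucc) (u l) = δ (v j.succ) (u j) then 1 else 0) else 0
  have hbad0 : ∀ v u j l, 0 ≤ bad v u j l := by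
    intro v u j l; simp only [bad]; split_ifs <;> norm_num
  have pt : ∀ v u, d ^ n * (mu N δ (n + 1) v u + ∑ j : Fin n, mu N δ (n + 1) v u * L (v j.castSucc.succ)
      - (1 + n * Real.log b) * ∑ j, ∑ l, mu N δ (n + 1) v u * bad v u j l) ≤
      if SS N δ (n + 1) v u ∧
        ∀ j l : Fin (n + 1), j < l → δ (v l.castSucc) (u l) ≠ δ (v j.succ) (u j)
        then (1 : ℝ) else 0 := by
    intro v u
    have hmu := mu_nonneg N δ (n + 1) v u
    have hdn : 0 < d ^ n := by positivity
    by_cases hS : SS N δ (n + 1) v u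
    · have hdeg : ∀ j, 1 ≤ deg N (v j) := by
        intro j
        cases j using Fin.cases with
        | zero => exact deg_pos N (SS_N N δ hS 0).1
        | succ j => exact deg_pos N (SS_N N δ hS j).2
      simp only [← Finset.mul_sum]
      have hB0 : 0 ≤ ∑ j, ∑ l, bad v u j l :=
        Finset.sum_nonneg fun j _ => Finset.sum_nonneg fun l _ => hbad0 v u j l
      by_cases hg : ∀ j l : Fin (n + 1), j < l → δ (v l.castSucc) (u l) ≠ δ (v j.succ) (u j)
      · rw [if_pos ⟨hS, hg⟩]
        have e1 : mu N δ (n + 1) v u * ∏ j : Fin n, deg N (v j.castSucc.succ) = 1 := by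
          rw [mu, if_pos hS, Fin.prod_univ_succ, Fin.prod_univ_castSucc, Finset.prod_inv_distrib]
          have a1 := hdeg 0
          have a2 := hdeg (Fin.last (n + 1))
          have a3 : 0 < ∏ j : Fin n, deg N (v j.castSucc.succ) :=
            Finset.prod_pos fun j _ => lt_of_lt_of_le one_pos (hdeg _)
          rw [Fin.succ_last]
          field_simp
        have e2 : d ^ n * (1 + ∑ j : Fin n, L (v j.castSucc.succ)) ≤
            ∏ j : Fin n, deg N (v j.castSucc.succ) := by
          have h := Real.add_one_le_exp (∑ j : Fin n, L (v j.castSucc.succ))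
          rw [Real.exp_sum] at h
          have : ∀ j : Fin n, Real.exp (L (v j.castSucc.succ)) = deg N (v j.castSucc.succ) / d := by
            intro j
            exact Real.exp_log (div_pos (lt_of_lt_of_le one_pos (hdeg _)) (by linarith))
          simp only [this, Finset.prod_div_distrib, Finset.prod_const, Finset.card_univ,
            Fintype.card_fin] at h
          rw [le_div_iff₀ hdn] at h
          linarith
        have e3 := mul_le_mul_of_nonneg_left e2 hmu
        have e4 : 0 ≤ d ^ n * ((1 + n * Real.log b) * (mu N δ (n + 1) v u * ∑ j, ∑ l, bad v u j l)) := by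
          positivity
        nlinarith [e1, e3, e4]
      · rw [if_neg (fun h => hg h.2)]
        push Not at hg
        obtain ⟨j, l, hjl, he⟩ := hg
        have hB1 : 1 ≤ ∑ j, ∑ l, bad v u j l := by
          have q1 : bad v u j l = 1 := by simp only [bad, if_pos hjl, if_pos he]
          rw [← q1]
          refine le_trans (Finset.single_le_sum (f := fun l => bad v u j l)
            (fun l _ => hbad0 v u j l) (Finset.mem_univ l)) ?_
          exact Finset.single_le_sum (f := fun j => ∑ l, bad v u j l)
            (fun j _ => Finset.sum_nonneg fun l _ => hbad0 v u j l) (Finset.mem_univ j)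
        have hL : ∑ j : Fin n, L (v j.castSucc.succ) ≤ n * Real.log b := by
          calc _ ≤ ∑ j : Fin n, Real.log b := by
                refine Finset.sum_le_sum fun j _ => ?_
                have a := hdeg j.castSucc.succ
                refine Real.log_le_log (div_pos (by linarith) (by linarith)) ?_
                exact (div_le_self (by linarith) hd).trans (hdb _)
            _ = _ := by simp
        have hx : (1 + ∑ j : Fin n, L (v j.castSucc.succ)) -
            (1 + n * Real.log b) * ∑ j, ∑ l, bad v u j l ≤ 0 := by
          nlinarith
        have := mul_nonneg hdn.le hmu
        nlinarith
    · have : mu N δ (n + 1) v u = 0 := by rw [mu, if_neg hS]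
      rw [if_neg (fun h => hS h.1)]
      simp [this]
  refine le_trans ?_ (Finset.sum_le_sum fun v _ => Finset.sum_le_sum fun u _ => pt v u)
  simp only [← Finset.mul_sum, Finset.sum_add_distrib, Finset.sum_sub_distrib]
  rw [mul_comm Z, mul_assoc]
  refine mul_le_mul_of_nonneg_left ?_ (by positivity)
  have s1 : ∑ v, ∑ u, mu N δ (n + 1) v u = Z * ∑ B, deg N B := by
    have := vertex_marg N δ k hk h1 (n + 1) (fun _ => 1) 0
    simpa using this
  have s2 : 0 ≤ ∑ v, ∑ u, mu N δ (n + 1) v u * ∑ j : Fin n, L (v j.castSucc.succ) := by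
    simp only [Finset.mul_sum]
    have : ∑ v, ∑ u, ∑ j : Fin n, mu N δ (n + 1) v u * L (v j.castSucc.succ) =
        ∑ j : Fin n, ∑ v, ∑ u, mu N δ (n + 1) v u * L (v j.castSucc.succ) := by
      rw [sum_rot]
    rw [this]
    refine Finset.sum_nonneg fun j _ => ?_
    rw [vertex_marg N δ k hk h1 (n + 1) L]
    refine mul_nonneg hZ0 ?_
    have hp : ∀ B, deg N B - d ≤ deg N B * L B := by
      intro B
      rcases (deg_nonneg N B).eq_or_lt with h | h
      · rw [← h]; simp; linarith
      · have hq : 0 < deg N B / d := div_pos h (by linarith)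
        have := Real.one_sub_inv_le_log_of_pos hq
        have h3 := mul_le_mul_of_nonneg_left this h.le
        have h4 : deg N B * (1 - (deg N B / d)⁻¹) = deg N B - d := by
          field_simp
        linarith
    have := Finset.sum_le_sum (fun B (_ : B ∈ univ) => hp B)
    rw [Finset.sum_sub_distrib, ← hE] at this
    simp only [Finset.sum_const, Finset.card_univ, nsmul_eq_mul] at this
    rw [← hbdef] at this
    linarith
  have s3 : ∑ v, ∑ u, mu N δ (n + 1) v u * ∑ j, ∑ l, bad v u j l ≤ Z * (((n : ℝ) + 1) ^ 2 * b) := by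
    simp only [Finset.mul_sum]
    have : ∑ v, ∑ u, ∑ j, ∑ l, mu N δ (n + 1) v u * bad v u j l =
        ∑ j, ∑ l, ∑ v, ∑ u, mu N δ (n + 1) v u * bad v u j l := by
      rw [sum_rot]
      refine Finset.sum_congr rfl fun j _ => ?_
      rw [sum_rot]
    rw [this]
    have hone : ∀ j l, ∑ v, ∑ u, mu N δ (n + 1) v u * bad v u j l ≤ Z * b := by
      intro j l
      by_cases hjl : j < l
      · simp only [bad, if_pos hjl]
        exact bad_marg N δ k hk h1 h2 (n + 1) j l hjl
      · simp only [bad, if_neg hjl]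
        simp only [mul_zero, Finset.sum_const_zero]
        positivity
    calc _ ≤ ∑ j : Fin (n + 1), ∑ l : Fin (n + 1), Z * b :=
          Finset.sum_le_sum fun j _ => Finset.sum_le_sum fun l _ => hone j l
      _ = _ := by
        simp only [Finset.sum_const, Finset.card_univ, Fintype.card_fin, nsmul_eq_mul]
        push_cast; ring
  have s4 := mul_le_mul_of_nonneg_left s3 hQ
  rw [s1]
  nlinarith [s2, s4]
end

theorem geo : ∀ (m : ℕ) (v : Fin (m + 1) → Finset ℕ) (u : Fin m → Finset ℕ) (x y : Fin m → ℕ),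
    (∀ j, x j ∉ v j.castSucc ∧ u j = insert (x j) (v j.castSucc) ∧
      y j ∉ v j.succ ∧ u j = insert (y j) (v j.succ)) →
    (∀ j l, j ≤ l → y l ≠ x j) → (∀ j l, j < l → x l ≠ y j) →
    v (Fin.last m) \ v 0 ⊆ univ.image x ∧ v 0 \ v (Fin.last m) ⊆ univ.image y ∧
      (v (Fin.last m) \ v 0).card = m := by
  intro m
  induction m with
  | zero => intro v u x y _ _ _; simp
  | succ m ih =>
    intro v u x y h hyx hxy
    obtain ⟨i1, i2, i3⟩ := ih (fun j => v j.castSucc) (fun j => u j.castSucc)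
      (fun j => x j.castSucc) (fun j => y j.castSucc) (fun j => h j.castSucc)
      (fun j l hjl => hyx _ _ (by simpa using hjl)) (fun j l hjl => hxy _ _ (by simpa using hjl))
    obtain ⟨g1, g2, g3, g4⟩ := h (Fin.last m)
    rw [Fin.succ_last] at g3 g4
    simp only [Fin.castSucc_zero] at i1 i2 i3
    set P := v (Fin.last m).castSucc with hP
    set Q := v (Fin.last (m + 1)) with hQ
    set X := x (Fin.last m) with hX
    set Y := y (Fin.last m) with hY
    have hX0 : X ∉ v 0 := by
      intro hX0
      have := i2 (Finset.mem_sdiff.2 ⟨hX0, g1⟩)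
      obtain ⟨j, _, hj⟩ := Finset.mem_image.1 this
      exact hxy j.castSucc (Fin.last m) (Fin.castSucc_lt_last j) hj.symm
    have hYP : Y ∉ P \ v 0 := by
      intro hY0
      obtain ⟨j, _, hj⟩ := Finset.mem_image.1 (i1 hY0)
      exact hyx j.castSucc (Fin.last m) (Fin.le_last _) hj.symm
    have hXY : Y ≠ X := hyx _ _ le_rfl
    have hmem : ∀ z, z ∈ Q ↔ (z = X ∨ z ∈ P) ∧ z ≠ Y := by
      intro z
      have := congrArg (z ∈ ·) (g2.symm.trans g4)
      simp only [Finset.mem_insert, eq_iff_iff] at this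
      constructor
      · intro hz
        refine ⟨this.2 (Or.inr hz), ?_⟩
        rintro rfl
        exact g3 hz
      · rintro ⟨hz, hne⟩
        exact (this.1 hz).resolve_left hne
    have hQ0 : Q \ v 0 = insert X (P \ v 0) := by
      ext z
      simp only [Finset.mem_sdiff, Finset.mem_insert, hmem]
      constructor
      · rintro ⟨⟨hz, _⟩, h0⟩
        exact hz.imp id fun h => ⟨h, h0⟩
      · rintro (rfl | ⟨hz, h0⟩)
        · exact ⟨⟨Or.inl rfl, hXY.symm⟩, hX0⟩
        · refine ⟨⟨Or.inr hz, ?_⟩, h0⟩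
          rintro rfl
          exact hYP (Finset.mem_sdiff.2 ⟨hz, h0⟩)
    refine ⟨?_, ?_, ?_⟩
    · rw [hQ0]
      intro z hz
      rcases Finset.mem_insert.1 hz with rfl | hz
      · exact Finset.mem_image_of_mem _ (Finset.mem_univ _)
      · obtain ⟨j, _, hj⟩ := Finset.mem_image.1 (i1 hz)
        exact Finset.mem_image.2 ⟨_, Finset.mem_univ _, hj⟩
    · intro z hz
      obtain ⟨hz0, hzQ⟩ := Finset.mem_sdiff.1 hz
      by_cases hzP : z ∈ P
      · have : z = Y := by
          by_contra hne
          exact hzQ ((hmem z).2 ⟨Or.inr hzP, hne⟩)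
        rw [this]
        exact Finset.mem_image_of_mem _ (Finset.mem_univ _)
      · obtain ⟨j, _, hj⟩ := Finset.mem_image.1 (i2 (Finset.mem_sdiff.2 ⟨hz0, hzP⟩))
        exact Finset.mem_image.2 ⟨_, Finset.mem_univ _, hj⟩
    · rw [hQ0, Finset.card_insert_of_notMem, i3]
      intro h
      exact g1 (Finset.mem_sdiff.1 h).1

theorem delta_spec {r : ℕ} {A B : Finset ℕ} (hr : 1 ≤ r) (hA : A.card = r) (hB : B.card = r - 1)
    (h : B ⊆ A) : (A \ B).sum id ∉ B ∧ A = insert ((A \ B).sum id) B := by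
  have hc : (A \ B).card = 1 := by rw [Finset.card_sdiff_of_subset h]; omega
  obtain ⟨x, hx⟩ := Finset.card_eq_one.1 hc
  rw [hx, Finset.sum_singleton, id]
  have hxm : x ∈ A \ B := by rw [hx]; simp
  refine ⟨(Finset.mem_sdiff.1 hxm).2, ?_⟩
  rw [← Finset.sdiff_union_of_subset h, hx]
  rfl

theorem prod_fact (k : ℕ) : ∀ m, m ≤ k - 1 →
    (∏ l ∈ range m, ((k - l - 1 : ℕ) : ℝ)) = ((k - 1).factorial : ℝ) / ((k - m - 1).factorial : ℝ) := by
  intro m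
  induction m with
  | zero => intro _; simp; rw [div_self]; positivity
  | succ m ih =>
    intro hm
    rw [Finset.prod_range_succ, ih (by omega)]
    obtain ⟨q, hq⟩ : ∃ q, k - m - 1 = q + 1 := ⟨k - m - 2, by omega⟩
    have hq' : k - (m + 1) - 1 = q := by omega
    rw [hq, hq', Nat.factorial_succ]
    push_cast
    field_simp

set_option maxHeartbeats 4000000 in
theorem final (k : ℕ) (hk : 2 ≤ k) :
    ∃ C : ℝ, 0 < C ∧ ∀ i : ℕ, 1 ≤ i → i ≤ k - 1 → ∀ r : ℕ, k ≤ r →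
      ∀ 𝒜 ℬ : Finset (Finset ℕ), (∀ A ∈ 𝒜, A.card = r) → (∀ B ∈ ℬ, B.card = r - 1) →
      1 ≤ 𝒜.card → 2 ≤ ℬ.card →
      ∀ prec : Finset ℕ → Finset ℕ → Prop,
        (∀ B A, prec B A → B ∈ ℬ ∧ A ∈ 𝒜 ∧ B ⊆ A) →
        (∀ A ∈ 𝒜, Set.ncard {B | prec B A} = k) →
        (((k - 1).factorial : ℝ) / ((k - i - 1).factorial : ℝ)) *
            ((𝒜.card * k : ℝ) / (ℬ.card : ℝ)) ^ i * (ℬ.card : ℝ) *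
            (1 - C * ℬ.card * Real.log ℬ.card / (k * 𝒜.card)) ≤
          Set.ncard {w : (Fin (i + 1) → Finset ℕ) × (Fin i → Finset ℕ) |
            (∀ j : Fin i, prec (w.1 j.castSucc) (w.2 j) ∧ prec (w.1 j.succ) (w.2 j)) ∧
            ((w.1 0 \ w.1 (Fin.last i)) ∪ (w.1 (Fin.last i) \ w.1 0)).card = 2 * i} := by
  refine ⟨(k : ℝ) ^ 2 * (k + 2), by positivity, ?_⟩
  intro i hi hik r hkr 𝒜 ℬ hAr hBr ha hb prec hprec hcount
  obtain ⟨n, rfl⟩ : ∃ n, i = n + 1 := ⟨i - 1, by omega⟩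
  set W := {w : (Fin (n + 1 + 1) → Finset ℕ) × (Fin (n + 1) → Finset ℕ) |
            (∀ j : Fin (n + 1), prec (w.1 j.castSucc) (w.2 j) ∧ prec (w.1 j.succ) (w.2 j)) ∧
            ((w.1 0 \ w.1 (Fin.last (n + 1))) ∪ (w.1 (Fin.last (n + 1)) \ w.1 0)).card = 2 * (n + 1)}
    with hW
  rw [← prod_fact k (n + 1) hik]
  set Z := ∏ l ∈ range (n + 1), ((k - l - 1 : ℕ) : ℝ) with hZ
  have hZ0 : 0 ≤ Z := Finset.prod_nonneg fun _ _ => Nat.cast_nonneg _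
  have hbR : (2 : ℝ) ≤ ℬ.card := by exact_mod_cast hb
  have haR : (1 : ℝ) ≤ 𝒜.card := by exact_mod_cast ha
  have hkR : (2 : ℝ) ≤ k := by exact_mod_cast hk
  set b : ℝ := (ℬ.card : ℝ) with hbdef
  set a : ℝ := (𝒜.card : ℝ) with hadef
  have hka : 0 < (k : ℝ) * a := by positivity
  have hlog : 1 ≤ 2 * Real.log b := by
    have h := Real.log_two_gt_d9
    have := Real.log_le_log (by norm_num) hbR
    linarith
  have hK : 1 ≤ (k : ℝ) ^ 2 * (k + 2) * Real.log b := by nlinarith [mul_nonneg (show (0:ℝ) ≤ k^2*(k+2) - 2 by nlinarith) (show 0 ≤ Real.log b by linarith)]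
  have hre : Z * (a * k / b) ^ (n + 1) * b * (1 - (k : ℝ) ^ 2 * (k + 2) * b * Real.log b / (k * a)) =
      Z * (a * k / b) ^ n * (k * a - (k : ℝ) ^ 2 * (k + 2) * b * Real.log b) := by
    have e1 : a * k / b * b = k * a := by field_simp
    have e2 : (k * a) * (1 - (k : ℝ) ^ 2 * (k + 2) * b * Real.log b / (k * a)) =
        k * a - (k : ℝ) ^ 2 * (k + 2) * b * Real.log b := by
      rw [mul_sub, mul_one, mul_div_cancel₀ _ hka.ne']
    rw [← e2, ← e1, pow_succ]
    ring
  rw [hre]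
  by_cases hd : 1 ≤ a * k / b
  swap
  · have hd' : k * a < b := by
      rw [not_le, div_lt_one (by linarith)] at hd
      linarith
    have : k * a - (k : ℝ) ^ 2 * (k + 2) * b * Real.log b ≤ 0 := by nlinarith
    refine le_trans (mul_nonpos_of_nonneg_of_nonpos (by positivity) this) (Nat.cast_nonneg _)
  let N : ℬ → 𝒜 → Prop := fun B A => prec B.1 A.1
  let δ : ℬ → 𝒜 → ℕ := fun B A => (A.1 \ B.1).sum id
  have hδ : ∀ B A, N B A → δ B A ∉ B.1 ∧ A.1 = insert (δ B A) B.1 := by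
    intro B A h
    exact delta_spec (by omega : 1 ≤ r) (hAr _ A.2) (hBr _ B.2) (hprec _ _ h).2.2
  have hkN : ∀ A, (univ.filter fun B => N B A).card = k := by
    intro A
    rw [← hcount A.1 A.2, ← Set.ncard_coe_finset, ← Set.ncard_image_of_injective _ Subtype.val_injective]
    congr 1
    ext B
    simp only [Set.mem_image, Set.mem_ofPred_eq, coe_filter, mem_univ, true_and, N]
    constructor
    · rintro ⟨x, hx, rfl⟩; exact hx
    · intro h; exact ⟨⟨B, (hprec _ _ h).1⟩, h, rfl⟩
  have h1 : ∀ A B B', N B A → N B' A → δ B A = δ B' A → B = B' := by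
    intro A B B' h h' he
    obtain ⟨p1, p2⟩ := hδ B A h
    obtain ⟨q1, q2⟩ := hδ B' A h'
    apply Subtype.ext
    rw [← Finset.erase_insert p1, ← Finset.erase_insert q1, ← p2, ← q2, he]
  have h2 : ∀ B A A', N B A → N B A' → δ B A = δ B A' → A = A' := by
    intro B A A' h h' he
    apply Subtype.ext
    rw [(hδ B A h).2, (hδ B A' h').2, he]
  have hcardB : (Fintype.card ℬ : ℝ) = b := by simp [hbdef]
  have hdb : ∀ B, deg N B ≤ (Fintype.card ℬ : ℝ) := by
    intro B
    unfold deg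
    have hex : ∀ A, ∃ B', N B' A ∧ B' ≠ B := by
      intro A
      have : 1 < (univ.filter fun B => N B A).card := by rw [hkN]; omega
      obtain ⟨B', hB', hne⟩ := Finset.exists_mem_ne this B
      exact ⟨B', by simpa using hB', hne⟩
    choose g hg hgne using hex
    have : (univ.filter fun A => N B A).card ≤ (univ : Finset ℬ).card := by
      refine Finset.card_le_card_of_injOn g (fun _ _ => Finset.mem_coe.2 (Finset.mem_univ _)) ?_
      intro A hA A' hA' he
      have hA : N B A := by simpa using hA
      have hA' : N B A' := by simpa using hA'
      have hu : ∀ A, N B A → A.1 = B.1 ∪ (g A).1 := by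
        intro A hA
        obtain ⟨p1, p2⟩ := hδ B A hA
        obtain ⟨q1, q2⟩ := hδ (g A) A (hg A)
        have hBA := (hprec _ _ hA).2.2
        have hgA := (hprec _ _ (hg A)).2.2
        refine Finset.Subset.antisymm ?_ (Finset.union_subset hBA hgA)
        intro z hz
        by_contra hzn
        simp only [Finset.mem_union, not_or] at hzn
        have z1 : z = δ B A := by
          rw [p2] at hz
          exact (Finset.mem_insert.1 hz).resolve_right hzn.1
        have z2 : z = δ (g A) A := by
          rw [q2] at hz
          exact (Finset.mem_insert.1 hz).resolve_right hzn.2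
        exact hgne A (h1 A _ _ (hg A) hA (z2.symm.trans z1))
      apply Subtype.ext
      rw [hu A hA, hu A' hA', he]
    rw [Finset.card_univ] at this
    exact_mod_cast this
  have hE : ∑ B, deg N B = k * a := by
    unfold deg
    have : ∑ B, (univ.filter fun A => N B A).card = ∑ A, (univ.filter fun B => N B A).card := by
      simp only [Finset.card_filter]
      exact Finset.sum_comm
    rw [← Nat.cast_sum, this]
    simp only [hkN, Finset.sum_const, Finset.card_univ, Fintype.card_coe, smul_eq_mul]
    push_cast
    rw [hadef]; ring
  have hmain := main_count N δ k hkN h1 h2 hdb n (a * k / b) hd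
    (by rw [hE, hcardB]; field_simp) (by rw [Fintype.card_coe]; omega)
  rw [hE, hcardB, ← hZ] at hmain
  have hlhs : Z * (a * k / b) ^ n * (k * a - (k : ℝ) ^ 2 * (k + 2) * b * Real.log b) ≤
      Z * (a * k / b) ^ n * (k * a - ((n : ℝ) + 1) ^ 2 * b * (1 + n * Real.log b)) := by
    refine mul_le_mul_of_nonneg_left ?_ (by positivity)
    have hn : (n : ℝ) + 1 ≤ k := by
      have : n + 1 ≤ k := by omega
      exact_mod_cast this
    have hn0 : (0 : ℝ) ≤ n := Nat.cast_nonneg n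
    have hl0 : 0 ≤ Real.log b := by linarith
    have t1 : ((n : ℝ) + 1) ^ 2 ≤ (k : ℝ) ^ 2 := by gcongr
    have t2 : 1 + n * Real.log b ≤ (k + 2) * Real.log b := by nlinarith
    have t3 : ((n : ℝ) + 1) ^ 2 * b * (1 + n * Real.log b) ≤ (k : ℝ) ^ 2 * b * ((k + 2) * Real.log b) := by
      gcongr
    linarith
  refine hlhs.trans (hmain.trans ?_)
  let Φ : (Fin (n + 2) → ℬ) × (Fin (n + 1) → 𝒜) →
      (Fin (n + 1 + 1) → Finset ℕ) × (Fin (n + 1) → Finset ℕ) :=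
    fun w => (fun j => (w.1 j).1, fun j => (w.2 j).1)
  have hΦ : Function.Injective Φ := by
    rintro ⟨v, u⟩ ⟨v', u'⟩ h
    simp only [Φ, Prod.mk.injEq] at h
    ext1
    · funext j; exact Subtype.ext (congrFun h.1 j)
    · funext j; exact Subtype.ext (congrFun h.2 j)
  have hfin : W.Finite := by
    refine (Set.finite_range Φ).subset ?_
    rintro ⟨v, u⟩ ⟨h, -⟩
    simp only at h
    have hv : ∀ j, v j ∈ ℬ := by
      intro j
      cases j using Fin.cases with
      | zero => exact (hprec _ _ (h 0).1).1
      | succ j => exact (hprec _ _ (h j).2).1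
    exact ⟨(fun j => ⟨v j, hv j⟩, fun j => ⟨u j, (hprec _ _ (h j).1).2.1⟩), rfl⟩
  rw [← Fintype.sum_prod_type' (f := fun v u => if SS N δ (n + 1) v u ∧
      ∀ j l : Fin (n + 1), j < l → δ (v l.castSucc) (u l) ≠ δ (v j.succ) (u j)
      then (1 : ℝ) else 0), Finset.sum_boole]
  norm_cast
  rw [← Set.ncard_coe_finset, ← Set.ncard_image_of_injective _ hΦ]
  refine Set.ncard_le_ncard ?_ hfin
  rintro _ ⟨⟨v, u⟩, hw, rfl⟩
  simp only [coe_filter, mem_univ, true_and, Set.mem_ofPred_eq] at hw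
  obtain ⟨hS, hg⟩ := hw
  have hN := SS_N N δ hS
  refine ⟨fun j => hN j, ?_⟩
  obtain ⟨-, -, hc⟩ := geo (n + 1) (fun j => (v j).1) (fun j => (u j).1)
    (fun j => δ (v j.castSucc) (u j)) (fun j => δ (v j.succ) (u j))
    (fun j => ⟨(hδ _ _ (hN j).1).1, (hδ _ _ (hN j).1).2, (hδ _ _ (hN j).2).1, (hδ _ _ (hN j).2).2⟩)
    (fun j l hjl => SS_avoid N δ k hkN h1 hS j l hjl) hg
  have hcomm : ((v 0).1 \ (v (Fin.last (n + 1))).1).card =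
      ((v (Fin.last (n + 1))).1 \ (v 0).1).card :=
    Finset.card_sdiff_comm (by rw [hBr _ (v 0).2, hBr _ (v _).2])
  change (((v 0).1 \ (v (Fin.last (n + 1))).1) ∪ ((v (Fin.last (n + 1))).1 \ (v 0).1)).card = _
  rw [Finset.card_union_of_disjoint, hcomm, hc]
  · ring
  · exact disjoint_sdiff_sdiff
end WW

theorem stmt_17 (k : ℕ) (hk : 2 ≤ k) :
    ∃ C : ℝ, 0 < C ∧ ∀ i : ℕ, 1 ≤ i → i ≤ k - 1 → ∀ r : ℕ, k ≤ r →
      ∀ 𝒜 ℬ : Finset (Finset ℕ), ValidPair r k 𝒜 ℬ →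
      1 ≤ 𝒜.card → 2 ≤ ℬ.card →
      ∀ prec : Finset ℕ → Finset ℕ → Prop,
        (∀ B A, prec B A → B ∈ ℬ ∧ A ∈ 𝒜 ∧ B ⊆ A) →
        (∀ A ∈ 𝒜, Set.ncard {B | prec B A} = k) →
        (((k - 1).factorial : ℝ) / ((k - i - 1).factorial : ℝ)) *
            ((𝒜.card * k : ℝ) / (ℬ.card : ℝ)) ^ i * (ℬ.card : ℝ) *
            (1 - C * ℬ.card * Real.log ℬ.card / (k * 𝒜.card)) ≤
          Set.ncard {w : (Fin (i + 1) → Finset ℕ) × (Fin i → Finset ℕ) |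
            (∀ j : Fin i, prec (w.1 j.castSucc) (w.2 j) ∧ prec (w.1 j.succ) (w.2 j)) ∧
            (symmDiff (w.1 0) (w.1 (Fin.last i))).card = 2 * i} := by
  obtain ⟨C, hC, h⟩ := WW.final k hk
  refine ⟨C, hC, ?_⟩
  intro i hi hik r hkr 𝒜 ℬ hV ha hb prec hprec hcount
  exact h i hi hik r hkr 𝒜 ℬ hV.1 hV.2.1 ha hb prec hprec hcount
end
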